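/- arXiv:1404.1629 — 3 statements merged into one kernel-verified Lean document; each statement's English description precedes it below -/
import Mathlib

section
/- There exists a constant N, depending only on d, δ, K_0, and G, such that for every K ≥ 0 one has in G the inequalities |u_K − g| + |v_K − g| ≤ Nρ and |u_K| + |v_K| ≤ N, where ρ(x) = dist(x, G^c). -/
noncomputable section

open MeasureTheory Set Filter Topology
open scoped ENNReal NNReal

/-- Euclidean space `ℝ^d`. -/
abbrev E (d : ℕ) : Type := EuclideanSpace ℝ (Fin d)

/-- Euclidean norm of a vector given as `Fin d → ℝ`. -/
def vecNorm {d : ℕ} (v : Fin d → ℝ) : ℝ := Real.sqrt (∑ i, (v i) ^ 2)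

/-- Hilbert–Schmidt norm `‖σ‖² = tr σσ*` of a `d × d` matrix. -/
def matNorm {d : ℕ} (m : Fin d → Fin d → ℝ) : ℝ := Real.sqrt (∑ i, ∑ j, (m i j) ^ 2)

/-- `m ∈ S_δ`: `m` is symmetric and `δ|ξ|² ≤ m_{ij}ξ^iξ^j ≤ δ⁻¹|ξ|²` for all `ξ`. -/
def memSdelta {d : ℕ} (δ : ℝ) (m : Fin d → Fin d → ℝ) : Prop :=
  (∀ i j, m i j = m j i) ∧
  ∀ ξ : Fin d → ℝ,
    δ * (∑ i, (ξ i) ^ 2) ≤ (∑ i, ∑ j, m i j * ξ i * ξ j) ∧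
    (∑ i, ∑ j, m i j * ξ i * ξ j) ≤ δ⁻¹ * (∑ i, (ξ i) ^ 2)

/-- First partial derivative `D_i u(x)`. -/
def D1 {d : ℕ} (u : E d → ℝ) (x : E d) (i : Fin d) : ℝ :=
  fderiv ℝ u x (EuclideanSpace.single i 1)

/-- Second partial derivative `D_{ij} u(x)`. -/
def D2 {d : ℕ} (u : E d → ℝ) (x : E d) (i j : Fin d) : ℝ :=
  fderiv ℝ (fun y => fderiv ℝ u y (EuclideanSpace.single j 1)) x (EuclideanSpace.single i 1)

/-- Third partial derivative `D_{ijk} u(x)`. -/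
def D3 {d : ℕ} (u : E d → ℝ) (x : E d) (i j k : Fin d) : ℝ :=
  fderiv ℝ (fun y => D2 u y j k) x (EuclideanSpace.single i 1)

/-- `L^{αβ}u(x) = a^{αβ}_{ij}(x) D_{ij}u(x) + b^{αβ}_i(x) D_i u(x) - c^{αβ}(x) u(x)`. -/
def Lop {d : ℕ} {A B : Type} (a : A → B → E d → Fin d → Fin d → ℝ)
    (b : A → B → E d → Fin d → ℝ) (c : A → B → E d → ℝ)
    (α : A) (β : B) (u : E d → ℝ) (x : E d) : ℝ :=
  (∑ i, ∑ j, a α β x i j * D2 u x i j) + (∑ i, b α β x i * D1 u x i) - c α β x * u x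

/-- The Isaacs operator `F[u](x) = sup_α inf_β [L^{αβ}u(x) + f^{αβ}(x)]`. -/
def Fop {d : ℕ} {A B : Type} (a : A → B → E d → Fin d → Fin d → ℝ)
    (b : A → B → E d → Fin d → ℝ) (c f : A → B → E d → ℝ) (u : E d → ℝ) (x : E d) : ℝ :=
  ⨆ α : A, ⨅ β : B, (Lop a b c α β u x + f α β x)

/-- `P[u](x) = P(D_{ij}u(x), D_i u(x), u(x))`. -/
def Pop {d : ℕ} (P : (Fin d → Fin d → ℝ) → (Fin d → ℝ) → ℝ → ℝ) (u : E d → ℝ) (x : E d) : ℝ :=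
  P (fun i j => D2 u x i j) (fun i => D1 u x i) (u x)

/-- Assumption 2.1 of the paper on the coefficients `a, b, c, f`
(with Hölder exponent `γ` for `a` and modulus `ω` for `b, c, f`). -/
def CoeffAssump {d : ℕ} {A B : Type} [MetricSpace A] [MetricSpace B]
    (δ K0 γ : ℝ) (ω : ℝ → ℝ)
    (a : A → B → E d → Fin d → Fin d → ℝ) (b : A → B → E d → Fin d → ℝ)
    (c f : A → B → E d → ℝ) : Prop :=
  (∀ α β x, memSdelta δ (a α β x)) ∧
  (∀ α β x, matNorm (a α β x) ≤ K0) ∧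
  (∀ α β x, vecNorm (b α β x) ≤ K0) ∧
  (∀ α β x, 0 ≤ c α β x ∧ c α β x ≤ K0) ∧
  (∀ α β x, |f α β x| ≤ K0) ∧
  (∀ α x, Continuous (fun β => a α β x) ∧ Continuous (fun β => b α β x) ∧
     Continuous (fun β => c α β x) ∧ Continuous (fun β => f α β x)) ∧
  (∀ (x : E d) (α₀ : A), ∀ ε : ℝ, 0 < ε → ∃ η : ℝ, 0 < η ∧ ∀ α : A, dist α α₀ < η → ∀ β : B,
     matNorm (fun i j => a α β x i j - a α₀ β x i j) < ε ∧
     vecNorm (fun i => b α β x i - b α₀ β x i) < ε ∧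
     |c α β x - c α₀ β x| < ε ∧ |f α β x - f α₀ β x| < ε) ∧
  (∀ α β x y, matNorm (fun i j => a α β x i j - a α β y i j) ≤ K0 * ‖x - y‖ ^ γ) ∧
  (∀ α β x y, vecNorm (fun i => b α β x i - b α β y i) ≤ K0 * ω ‖x - y‖) ∧
  (∀ α β x y, |c α β x - c α β y| ≤ K0 * ω ‖x - y‖) ∧
  (∀ α β x y, |f α β x - f α β y| ≤ K0 * ω ‖x - y‖)

/-- `ω` is a modulus of continuity with `t^χ ≤ ω(t)` on `[0,1]` (Remark 2.1). -/
def ModulusAssump (χ : ℝ) (ω : ℝ → ℝ) : Prop :=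
  Continuous ω ∧ MonotoneOn ω (Set.Ici 0) ∧ ω 0 = 0 ∧
  ∀ t : ℝ, t ∈ Set.Icc (0:ℝ) 1 → t ^ χ ≤ ω t

/-- `g ∈ C^{1,1}(ℝ^d)` with `‖g‖_{C^{1,1}} ≤ K0`. -/
def C11Bound {d : ℕ} (K0 : ℝ) (g : E d → ℝ) : Prop :=
  Differentiable ℝ g ∧ (∀ x, |g x| ≤ K0) ∧
  (∀ x y, |g x - g y| ≤ K0 * ‖x - y‖) ∧
  (∀ x y, ‖fderiv ℝ g x - fderiv ℝ g y‖ ≤ K0 * ‖x - y‖)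

/-- Properties of the special function `P(u_{ij}, u_i, u)` constructed in Krylov
[Methods Appl. Anal. 19 (2012)]: convex, positively homogeneous of degree one,
Lipschitz, with `(P_{u_{ij}}) ∈ S_δ̂`, `|(P_{u_i})| ≤ K₁`, `0 > P_u ≥ -K₁`
at any point of differentiability. -/
def PAssump {d : ℕ} (δhat K1 : ℝ)
    (P : (Fin d → Fin d → ℝ) → (Fin d → ℝ) → ℝ → ℝ) : Prop :=
  ConvexOn ℝ Set.univ (fun p : (Fin d → Fin d → ℝ) × (Fin d → ℝ) × ℝ => P p.1 p.2.1 p.2.2) ∧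
  (∀ t : ℝ, 0 ≤ t → ∀ m v r, P (t • m) (t • v) (t * r) = t * P m v r) ∧
  (∃ C : NNReal, LipschitzWith C
    (fun p : (Fin d → Fin d → ℝ) × (Fin d → ℝ) × ℝ => P p.1 p.2.1 p.2.2)) ∧
  (∀ p : (Fin d → Fin d → ℝ) × (Fin d → ℝ) × ℝ,
    DifferentiableAt ℝ (fun q : (Fin d → Fin d → ℝ) × (Fin d → ℝ) × ℝ => P q.1 q.2.1 q.2.2) p →
    memSdelta δhat (fun i j =>
      fderiv ℝ (fun q : (Fin d → Fin d → ℝ) × (Fin d → ℝ) × ℝ => P q.1 q.2.1 q.2.2) p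
        (Pi.single i (Pi.single j (1:ℝ)), 0, 0)) ∧
    vecNorm (fun i =>
      fderiv ℝ (fun q : (Fin d → Fin d → ℝ) × (Fin d → ℝ) × ℝ => P q.1 q.2.1 q.2.2) p
        (0, Pi.single i (1:ℝ), 0)) ≤ K1 ∧
    fderiv ℝ (fun q : (Fin d → Fin d → ℝ) × (Fin d → ℝ) × ℝ => P q.1 q.2.1 q.2.2) p (0, 0, 1) < 0 ∧
    -K1 ≤ fderiv ℝ (fun q : (Fin d → Fin d → ℝ) × (Fin d → ℝ) × ℝ => P q.1 q.2.1 q.2.2) p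
      (0, 0, 1))

/-- A bounded domain of class `C²` (described by a global `C²` defining function
with nonvanishing gradient on the boundary). -/
def IsC2Domain {d : ℕ} (G : Set (E d)) : Prop :=
  IsOpen G ∧ Bornology.IsBounded G ∧ G.Nonempty ∧ IsConnected G ∧
  ∃ ρ : E d → ℝ, ContDiff ℝ 2 ρ ∧ G = {x | ρ x < 0} ∧ ∀ x ∈ frontier G, fderiv ℝ ρ x ≠ 0

/-- The complete standing hypotheses (Assumption 2.1 etc.) of the paper. -/
def Setting {d : ℕ} {A B : Type} [MetricSpace A] [MetricSpace B]
    (δ K0 χ γ δhat K1 : ℝ) (ω : ℝ → ℝ)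
    (a : A → B → E d → Fin d → Fin d → ℝ) (b : A → B → E d → Fin d → ℝ)
    (c f : A → B → E d → ℝ) (G : Set (E d)) (g : E d → ℝ)
    (P : (Fin d → Fin d → ℝ) → (Fin d → ℝ) → ℝ → ℝ) : Prop :=
  1 ≤ d ∧ 0 < δ ∧ δ < 1 ∧ 0 ≤ K0 ∧ 0 < χ ∧ χ < 1 ∧
  γ = (4 - 3 * χ) / (8 - 4 * χ) ∧ 0 < δhat ∧ δhat < δ ∧ K0 ≤ K1 ∧
  Nonempty A ∧ Nonempty B ∧
  TopologicalSpace.SeparableSpace A ∧ TopologicalSpace.SeparableSpace B ∧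
  CoeffAssump δ K0 γ ω a b c f ∧ IsC2Domain G ∧ C11Bound K0 g ∧ PAssump δhat K1 P

/-- `u` is a solution of `max(F[u], P[u] - K) = 0` in `G` of class
`C^{1,1}_{loc}(G) ∩ C(Ḡ)` with boundary data `g` (the equation holding at almost
every point, as the second derivatives of a `C^{1,1}_{loc}` function exist a.e.). -/
def IsUSol {d : ℕ} {A B : Type} (a : A → B → E d → Fin d → Fin d → ℝ)
    (b : A → B → E d → Fin d → ℝ) (c f : A → B → E d → ℝ)
    (G : Set (E d)) (g : E d → ℝ)
    (P : (Fin d → Fin d → ℝ) → (Fin d → ℝ) → ℝ → ℝ) (K : ℝ) (u : E d → ℝ) : Prop :=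
  ContinuousOn u (closure G) ∧ Set.EqOn u g (frontier G) ∧
  DifferentiableOn ℝ u G ∧
  (∀ x ∈ G, ∃ r : ℝ, 0 < r ∧ Metric.ball x r ⊆ G ∧
     ∃ C : NNReal, LipschitzOnWith C (fderiv ℝ u) (Metric.ball x r)) ∧
  (∀ᵐ x ∂(volume : Measure (E d)), x ∈ G →
     max (Fop a b c f u x) (Pop P u x - K) = 0)

/-- `v` is a solution of `min(F[v], -P[-v] + K) = 0` in `G` of class
`C^{1,1}_{loc}(G) ∩ C(Ḡ)` with boundary data `g`. -/
def IsVSol {d : ℕ} {A B : Type} (a : A → B → E d → Fin d → Fin d → ℝ)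
    (b : A → B → E d → Fin d → ℝ) (c f : A → B → E d → ℝ)
    (G : Set (E d)) (g : E d → ℝ)
    (P : (Fin d → Fin d → ℝ) → (Fin d → ℝ) → ℝ → ℝ) (K : ℝ) (v : E d → ℝ) : Prop :=
  ContinuousOn v (closure G) ∧ Set.EqOn v g (frontier G) ∧
  DifferentiableOn ℝ v G ∧
  (∀ x ∈ G, ∃ r : ℝ, 0 < r ∧ Metric.ball x r ⊆ G ∧
     ∃ C : NNReal, LipschitzOnWith C (fderiv ℝ v) (Metric.ball x r)) ∧
  (∀ᵐ x ∂(volume : Measure (E d)), x ∈ G →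
     min (Fop a b c f v x) (-(Pop P (fun y => -(v y)) x) + K) = 0)

/-- `G_ε = {x ∈ G : dist(x, ∂G) > ε}`. -/
def Gshrink {d : ℕ} (G : Set (E d)) (ε : ℝ) : Set (E d) :=
  {x ∈ G | ε < Metric.infDist x (frontier G)}

/-- `u ∈ C^{1+χ}(Q)` with `‖u‖_{C^{1+χ}(Q)} ≤ Cb` (stated through the three
constituent quantities of the norm). -/
def HolderBound {d : ℕ} (χ : ℝ) (Q : Set (E d)) (u : E d → ℝ) (Cb : ℝ) : Prop :=
  (∀ x ∈ Q, DifferentiableAt ℝ u x) ∧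
  (∀ x ∈ Q, |u x| ≤ Cb) ∧
  (∀ x ∈ Q, ∀ y ∈ Q, |u x - u y| ≤ Cb * ‖x - y‖) ∧
  (∀ x ∈ Q, ∀ y ∈ Q, vecNorm (fun i => D1 u x i - D1 u y i) ≤ Cb * ‖x - y‖ ^ χ)

/-- `w` is a (continuous) viscosity solution of `F[w] = 0` in `G` with `w = g` on `∂G`. -/
def ViscositySolution {d : ℕ} {A B : Type} (a : A → B → E d → Fin d → Fin d → ℝ)
    (b : A → B → E d → Fin d → ℝ) (c f : A → B → E d → ℝ)
    (G : Set (E d)) (g : E d → ℝ) (w : E d → ℝ) : Prop :=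
  ContinuousOn w (closure G) ∧ Set.EqOn w g (frontier G) ∧
  (∀ φ : E d → ℝ, ContDiff ℝ (⊤ : ℕ∞) φ → ∀ x0 ∈ G,
     IsLocalMax (fun x => φ x - w x) x0 → φ x0 - w x0 = 0 → Fop a b c f φ x0 ≤ 0) ∧
  (∀ φ : E d → ℝ, ContDiff ℝ (⊤ : ℕ∞) φ → ∀ x0 ∈ G,
     IsLocalMin (fun x => φ x - w x) x0 → φ x0 - w x0 = 0 → 0 ≤ Fop a b c f φ x0)

/-- class of linear operators -/
def Cls {d : ℕ} (δ K : ℝ) (a : Fin d → Fin d → ℝ) (b : Fin d → ℝ) (c : ℝ) : Prop :=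
  memSdelta δ a ∧ vecNorm b ≤ K ∧ 0 ≤ c ∧ c ≤ K

/-- local `C^{1,1}` -/
def LocLip {d : ℕ} (G : Set (E d)) (u : E d → ℝ) : Prop :=
  ∀ x ∈ G, ∃ r : ℝ, 0 < r ∧ Metric.ball x r ⊆ G ∧
     ∃ C : NNReal, LipschitzOnWith C (fderiv ℝ u) (Metric.ball x r)

open scoped MatrixOrder Matrix.Norms.L2Operator in
lemma trace_le {d : ℕ} {δ : ℝ} (hδ : 0 < δ) {a H : Fin d → Fin d → ℝ} (ha : memSdelta δ a)
    (hH : ∀ ξ : Fin d → ℝ, ∑ i, ∑ j, H i j * ξ i * ξ j ≤ 0) :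
    ∑ i, ∑ j, a i j * H i j ≤ 0 := by
  have hp : (Matrix.of a).PosSemidef := by
    refine Matrix.PosSemidef.of_dotProduct_mulVec_nonneg ?_ ?_
    · ext i j; simp [Matrix.conjTranspose, ha.1 j i]
    · intro x
      have h1 := (ha.2 x).1
      have h2 : 0 ≤ δ * ∑ i, x i ^ 2 := by positivity
      have : star x ⬝ᵥ (Matrix.of a).mulVec x = ∑ i, ∑ j, a i j * x i * x j := by
        simp only [dotProduct, Matrix.mulVec, Finset.mul_sum]
        refine Finset.sum_congr rfl fun i _ => Finset.sum_congr rfl fun j _ => ?_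
        simp; ring
      rw [this]; linarith
  obtain ⟨B, hB⟩ := CStarAlgebra.nonneg_iff_eq_star_mul_self.mp hp.nonneg
  have e : ∀ i j, a i j = ∑ k, B k i * B k j := by
    intro i j
    have := congrFun (congrFun hB i) j
    simpa [Matrix.mul_apply, Matrix.star_eq_conjTranspose] using this
  have : ∑ i, ∑ j, a i j * H i j = ∑ k, ∑ i, ∑ j, H i j * B k i * B k j := by
    simp_rw [e, Finset.sum_mul]
    conv_rhs => rw [Finset.sum_comm]
    refine Finset.sum_congr rfl fun i _ => ?_
    conv_rhs => rw [Finset.sum_comm]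
    refine Finset.sum_congr rfl fun j _ => Finset.sum_congr rfl fun k _ => by ring
  rw [this]
  exact Finset.sum_nonpos fun k _ => hH _

lemma diag_le {d : ℕ} {δ : ℝ} {a : Fin d → Fin d → ℝ} (ha : memSdelta δ a) (i : Fin d) :
    a i i ≤ δ⁻¹ := by
  have := (ha.2 (Pi.single i 1)).2
  simpa [Pi.single_apply, Finset.sum_ite_eq, ite_pow] using this

lemma lin_le {d : ℕ} {δ s t : ℝ} (hδ : 0 < δ) (hs : 0 ≤ s) (ht : 0 ≤ t)
    {a H : Fin d → Fin d → ℝ} {y : Fin d → ℝ} (ha : memSdelta δ a)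
    (hH : ∀ ξ : Fin d → ℝ, ∑ i, ∑ j, H i j * ξ i * ξ j ≤
      s * ∑ i, ξ i ^ 2 - t * (∑ i, y i * ξ i) ^ 2) :
    ∑ i, ∑ j, a i j * H i j ≤ s * (d * δ⁻¹) - t * (δ * ∑ i, y i ^ 2) := by
  have key := trace_le hδ ha
    (H := fun i j => H i j - (if i = j then s else 0) + t * (y i * y j)) (by
      intro ξ
      have e : ∑ i, ∑ j, (H i j - (if i = j then s else 0) + t * (y i * y j)) * ξ i * ξ j
        = ∑ i, ∑ j, H i j * ξ i * ξ j - s * ∑ i, ξ i ^ 2 + t * (∑ i, y i * ξ i) ^ 2 := by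
        have e1 : s * ∑ i, ξ i ^ 2 = ∑ i, ∑ j, (if i = j then s else 0) * ξ i * ξ j := by
          rw [Finset.mul_sum]
          refine Finset.sum_congr rfl fun i _ => ?_
          simp [ite_mul]; ring
        have e2 : t * (∑ i, y i * ξ i) ^ 2 = ∑ i, ∑ j, t * (y i * y j) * ξ i * ξ j := by
          rw [sq, Finset.sum_mul_sum, Finset.mul_sum]
          refine Finset.sum_congr rfl fun i _ => ?_
          rw [Finset.mul_sum]
          refine Finset.sum_congr rfl fun j _ => by ring
        rw [e1, e2]
        simp only [← Finset.sum_sub_distrib, ← Finset.sum_add_distrib]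
        refine Finset.sum_congr rfl fun i _ => Finset.sum_congr rfl fun j _ => by ring
      rw [e]; linarith [hH ξ])
  have e : ∑ i, ∑ j, a i j * (H i j - (if i = j then s else 0) + t * (y i * y j))
      = ∑ i, ∑ j, a i j * H i j - s * ∑ i, a i i + t * ∑ i, ∑ j, a i j * y i * y j := by
    have e1 : s * ∑ i, a i i = ∑ i, ∑ j, a i j * (if i = j then s else 0) := by
      rw [Finset.mul_sum]
      refine Finset.sum_congr rfl fun i _ => ?_
      simp; ring
    have e2 : t * ∑ i, ∑ j, a i j * y i * y j = ∑ i, ∑ j, a i j * (t * (y i * y j)) := by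
      rw [Finset.mul_sum]
      refine Finset.sum_congr rfl fun i _ => ?_
      rw [Finset.mul_sum]
      refine Finset.sum_congr rfl fun j _ => by ring
    rw [e1, e2]
    simp only [← Finset.sum_sub_distrib, ← Finset.sum_add_distrib]
    refine Finset.sum_congr rfl fun i _ => Finset.sum_congr rfl fun j _ => by ring
  rw [e] at key
  have h1 : ∑ i, a i i ≤ d * δ⁻¹ := by
    calc ∑ i, a i i ≤ ∑ _i : Fin d, δ⁻¹ := Finset.sum_le_sum fun i _ => diag_le ha i
      _ = _ := by simp
  have h2 := mul_le_mul_of_nonneg_left h1 hs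
  have h3 := mul_le_mul_of_nonneg_left (ha.2 y).1 ht
  linarith

lemma memS_mono {d : ℕ} {δ δ' : ℝ} (hδ' : 0 < δ') (h : δ' ≤ δ) {a : Fin d → Fin d → ℝ}
    (ha : memSdelta δ a) : memSdelta δ' a := by
  refine ⟨ha.1, fun ξ => ?_⟩
  have h0 : 0 ≤ ∑ i, ξ i ^ 2 := by positivity
  have h1 := ha.2 ξ
  have h2 : δ⁻¹ ≤ δ'⁻¹ := inv_anti₀ hδ' h
  exact ⟨(mul_le_mul_of_nonneg_right h h0).trans h1.1,
    h1.2.trans (mul_le_mul_of_nonneg_right h2 h0)⟩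

/-- one dimensional second derivative test -/
lemma second_test {m m' : ℝ → ℝ} {m2 : ℝ} (h1 : ∀ᶠ t in 𝓝 (0:ℝ), HasDerivAt m (m' t) t)
    (h2 : HasDerivAt m' m2 0) (hm : IsLocalMax m 0) : m2 ≤ 0 := by
  by_contra hc
  push Not at hc
  have hd : deriv m =ᶠ[𝓝 0] m' := h1.mono fun t ht => ht.deriv
  have hd2 : HasDerivAt (deriv m) m2 0 := h2.congr_of_eventuallyEq hd
  have hmin : IsLocalMin m 0 := isLocalMin_of_deriv_deriv_pos (by rw [hd2.deriv]; exact hc)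
    hm.deriv_eq_zero h1.self_of_nhds.continuousAt
  have hconst : m =ᶠ[𝓝 0] fun _ => m 0 := by
    filter_upwards [hm, hmin] with t ht ht' using le_antisymm ht ht'
  have := hconst.deriv.deriv_eq
  simp [hd2.deriv] at this
  linarith

lemma null_image {d : ℕ} {G S : Set (E d)} {T : E d → E d}
    (hT : ∀ x ∈ G, ∃ r : ℝ, 0 < r ∧ ∃ C : NNReal, LipschitzOnWith C T (Metric.ball x r))
    (hSG : S ⊆ G) (hS : volume S = 0) : volume (T '' S) = 0 := by
  choose! r hr C hC using hT
  obtain ⟨t, htS, htc, hcov⟩ := TopologicalSpace.countable_cover_nhdsWithin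
    (s := S) (f := fun x => Metric.ball x (r x))
    (fun x hx => mem_nhdsWithin_of_mem_nhds (Metric.ball_mem_nhds x (hr x (hSG hx))))
  have hsub : T '' S ⊆ ⋃ x ∈ t, T '' (S ∩ Metric.ball x (r x)) := by
    rintro _ ⟨y, hy, rfl⟩
    obtain ⟨x, hx, hyx⟩ := mem_iUnion₂.1 (hcov hy)
    exact mem_iUnion₂.2 ⟨x, hx, y, ⟨hy, hyx⟩, rfl⟩
  refine measure_mono_null hsub ((measure_biUnion_null_iff htc).2 fun x hx => ?_)
  have hl : LipschitzOnWith (C x) T (S ∩ Metric.ball x (r x)) :=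
    (hC x (hSG (htS hx))).mono inter_subset_right
  have h0 := hl.hausdorffMeasure_image_le (d := d) (by positivity)
  have hz : (volume : Measure (E d)) (S ∩ Metric.ball x (r x)) = 0 :=
    measure_mono_null inter_subset_left hS
  have hHv : (Measure.hausdorffMeasure (d:ℝ) : Measure (E d)) ≪ volume := by
    have := MeasureTheory.isAddHaarMeasure_hausdorffMeasure (E := E d)
    rw [finrank_euclideanSpace_fin] at this
    exact Measure.absolutelyContinuous_isAddHaarMeasure _ _
  have hvH : (volume : Measure (E d)) ≪ (Measure.hausdorffMeasure (d:ℝ) : Measure (E d)) := by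
    have := MeasureTheory.isAddHaarMeasure_hausdorffMeasure (E := E d)
    rw [finrank_euclideanSpace_fin] at this
    exact Measure.absolutelyContinuous_isAddHaarMeasure _ _
  rw [hHv hz, mul_zero] at h0
  exact hvH (le_antisymm h0 bot_le)

lemma ae_diff {d : ℕ} {G : Set (E d)} {u : E d → ℝ} (hu : LocLip G u) :
    volume {x | x ∈ G ∧ ¬ DifferentiableAt ℝ (fderiv ℝ u) x} = 0 := by
  refine measure_null_of_locally_null _ fun x hx => ?_
  obtain ⟨r, hr, -, C, hC⟩ := hu x hx.1
  refine ⟨{x | x ∈ G ∧ ¬ DifferentiableAt ℝ (fderiv ℝ u) x} ∩ Metric.ball x r,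
    inter_mem_nhdsWithin _ (Metric.ball_mem_nhds x hr), ?_⟩
  have := hC.ae_differentiableWithinAt_of_mem (μ := (volume : Measure (E d)))
  refine measure_mono_null ?_ this
  rintro y ⟨⟨_, hy⟩, hyb⟩ hc
  exact hy ((hc hyb).differentiableAt (Metric.isOpen_ball.mem_nhds hyb))

lemma abp {d : ℕ} {G : Set (E d)} (hG : IsOpen G) (hGb : Bornology.IsBounded G) {w : E d → ℝ}
    (hwc : ContinuousOn w (closure G)) (hwf : ∀ x ∈ frontier G, w x ≤ 0)
    (hwd : DifferentiableOn ℝ w G) (hwl : LocLip G w) {x0 : E d} (hx0 : x0 ∈ G) (hM : 0 < w x0)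
    {Z : Set (E d)} (hZ : volume Z = 0) {η : ℝ} (hη : 0 < η) :
    ∃ x ∈ G, x ∉ Z ∧ 0 < w x ∧ ‖fderiv ℝ w x‖ ≤ η ∧
      ∀ y ∈ G, w y ≤ w x + fderiv ℝ w x (y - x) := by
  by_contra hcon
  push Not at hcon
  obtain ⟨D, hD0, hD⟩ : ∃ D > 0, ∀ y ∈ closure G, ‖y - x0‖ ≤ D := by
    obtain ⟨D, hD⟩ := hGb.closure.subset_closedBall x0
    refine ⟨max D 1, by positivity, fun y hy => ?_⟩
    have := hD hy
    rw [Metric.mem_closedBall, dist_eq_norm] at this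
    exact this.trans (le_max_left _ _)
  set η' := min η (w x0 / (2 * D)) with hη'
  have hη'0 : 0 < η' := lt_min hη (by positivity)
  have hcomp : IsCompact (closure G) := hGb.isCompact_closure
  set T : E d → E d := fun y => (InnerProductSpace.toDual ℝ (E d)).symm (fderiv ℝ w y) with hT
  have hsub : Metric.ball 0 η' ⊆ T '' (Z ∩ G) := by
    intro p hp
    rw [mem_ball_zero_iff] at hp
    have hpη : ‖p‖ ≤ η := (hp.le).trans (min_le_left _ _)
    have hpD : ‖p‖ * D ≤ w x0 / 2 := by
      have : ‖p‖ ≤ w x0 / (2 * D) := hp.le.trans (min_le_right _ _)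
      calc ‖p‖ * D ≤ w x0 / (2 * D) * D := by gcongr
        _ = w x0 / 2 := by field_simp
    have hcont : ContinuousOn (fun y => w y - inner ℝ p (y - x0)) (closure G) := by
      refine hwc.sub (Continuous.continuousOn ?_)
      fun_prop
    obtain ⟨x, hx, hmax⟩ := hcomp.exists_isMaxOn ⟨x0, subset_closure hx0⟩ hcont
    have h0 : w x0 ≤ w x - inner ℝ p (x - x0) := by
      have := hmax (subset_closure hx0)
      simpa using this
    have h1 : |inner ℝ p (x - x0)| ≤ w x0 / 2 := by
      refine (abs_real_inner_le_norm p (x - x0)).trans (le_trans ?_ hpD)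
      gcongr; exact hD x hx
    have hwx : 0 < w x := by
      have := (abs_le.1 h1).1
      linarith
    have hxG : x ∈ G := by
      by_contra hn
      have : x ∈ frontier G := ⟨hx, by rwa [hG.interior_eq]⟩
      linarith [hwf x this]
    have hdx : HasFDerivAt w (fderiv ℝ w x) x :=
      (hwd.differentiableAt (hG.mem_nhds hxG)).hasFDerivAt
    have hloc : IsLocalMax (fun y => w y - inner ℝ p (y - x0)) x :=
      hmax.isLocalMax (mem_of_superset (hG.mem_nhds hxG) subset_closure)
    have hin : HasFDerivAt (fun y : E d => inner ℝ p (y - x0)) (innerSL ℝ p) x := by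
      have h := (innerSL ℝ p).hasFDerivAt (x := x - x0)
      have h2 := h.comp x ((hasFDerivAt_id x).sub_const x0)
      exact h2
    have hz := hloc.hasFDerivAt_eq_zero (hdx.sub hin)
    have hfd : fderiv ℝ w x = innerSL ℝ p := sub_eq_zero.1 hz
    have hTx : T x = p := by
      simp only [hT]
      rw [hfd]
      exact (InnerProductSpace.toDual ℝ (E d)).symm_apply_apply p
    by_cases hxZ : x ∈ Z
    · exact ⟨x, ⟨hxZ, hxG⟩, hTx⟩
    · exfalso
      obtain ⟨y, hy, hlt⟩ := hcon x hxG hxZ hwx (by rw [hfd, innerSL_apply_norm]; exact hpη)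
      have := hmax (subset_closure hy)
      simp only [mem_ofPred_eq] at this
      rw [hfd, innerSL_apply_apply] at hlt
      have e : inner ℝ p (y - x) = inner ℝ p (y - x0) - inner ℝ p (x - x0) := by
        rw [← inner_sub_right]; congr 1; abel
      rw [e] at hlt
      linarith
  have hnull : volume (T '' (Z ∩ G)) = 0 := by
    refine null_image (G := G) ?_ inter_subset_right (measure_mono_null inter_subset_left hZ)
    intro x hx
    obtain ⟨r, hr, -, C, hC⟩ := hwl x hx
    refine ⟨r, hr, C, fun y hy z hz => ?_⟩
    simp only [hT]
    rw [LinearIsometryEquiv.edist_map]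
    exact hC hy hz
  have := measure_mono_null hsub hnull
  exact (Metric.measure_ball_pos volume (0 : E d) hη'0).ne' this

lemma D2_quad {d : ℕ} {u : E d → ℝ} {x : E d} (h : DifferentiableAt ℝ (fderiv ℝ u) x)
    (ξ : E d) : ∑ i, ∑ j, D2 u x i j * ξ i * ξ j = fderiv ℝ (fderiv ℝ u) x ξ ξ := by
  have e : ∀ i j, D2 u x i j = fderiv ℝ (fderiv ℝ u) x (EuclideanSpace.single i 1)
      (EuclideanSpace.single j 1) := by
    intro i j
    unfold D2
    have := (h.hasFDerivAt.clm_apply (hasFDerivAt_const (EuclideanSpace.single j (1:ℝ)) x)).fderiv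
    rw [this]
    simp
  have hξ : ξ = ∑ i, ξ i • EuclideanSpace.single i (1:ℝ) := by
    ext k; simp [Pi.single_apply]
  conv_rhs => rw [hξ]
  simp only [map_sum, map_smul, _root_.sum_apply, _root_.smul_apply,
    smul_eq_mul, e, Finset.mul_sum]
  rw [Finset.sum_comm]
  refine Finset.sum_congr rfl fun i _ => Finset.sum_congr rfl fun j _ => by ring

lemma D1_lin {d : ℕ} (u : E d → ℝ) (x : E d) (b : Fin d → ℝ) :
    ∑ i, b i * D1 u x i = fderiv ℝ u x (WithLp.toLp 2 b) := by
  have hb : (WithLp.toLp 2 b : E d) = ∑ i, b i • EuclideanSpace.single i (1:ℝ) := by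
    ext k; simp [Pi.single_apply]
  rw [hb]
  simp [D1, map_sum]

lemma vecNorm_eq {d : ℕ} (b : Fin d → ℝ) : vecNorm b = ‖(WithLp.toLp 2 b : E d)‖ := by
  simp [vecNorm, EuclideanSpace.norm_eq]

/-- barrier -/
def psi {d : ℕ} (l r : ℝ) (z : E d) (x : E d) : ℝ :=
  Real.exp (-l * r ^ 2) - Real.exp (-l * ‖x - z‖ ^ 2)

lemma psi_contDiff {d : ℕ} (l r : ℝ) (z : E d) : ContDiff ℝ 2 (psi l r z) := by
  unfold psi
  exact contDiff_const.sub ((contDiff_const.mul ((contDiff_id.sub contDiff_const).norm_sq ℝ)).exp)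

lemma psi_fderiv {d : ℕ} (l r : ℝ) (z x : E d) :
    HasFDerivAt (psi l r z) ((2 * l * Real.exp (-l * ‖x - z‖ ^ 2)) • innerSL ℝ (x - z)) x := by
  have h1 : HasFDerivAt (fun y : E d => ‖y - z‖ ^ 2) (2 • innerSL ℝ (x - z)) x := by
    have := ((hasFDerivAt_id x).sub_const z).norm_sq
    exact this
  have h2 := ((h1.const_mul (-l)).exp).const_sub (Real.exp (-l * r ^ 2))
  refine h2.congr_fderiv ?_
  ext v
  simp
  ring

/-- The second order information at a contact point. -/
lemma contact {d : ℕ} {G : Set (E d)} (hG : IsOpen G) {K0 : ℝ} {u g : E d → ℝ}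
    (hg : C11Bound K0 g) (hud : DifferentiableOn ℝ u G) {l r N : ℝ} {z x : E d} (hx : x ∈ G)
    (hu2 : DifferentiableAt ℝ (fderiv ℝ u) x) {κ : E d →L[ℝ] ℝ}
    (hc : ∀ y ∈ G, u y - g y - N * psi l r z y ≤ u x - g x - N * psi l r z x + κ (y - x))
    (ξ : E d) :
    ∑ i, ∑ j, D2 u x i j * ξ i * ξ j ≤
      (2 * K0 + N * (2 * l * Real.exp (-l * ‖x - z‖ ^ 2))) * ∑ i, ξ i ^ 2
       - N * (4 * l ^ 2 * Real.exp (-l * ‖x - z‖ ^ 2)) * (∑ i, (x - z) i * ξ i) ^ 2 := by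
  rw [D2_quad hu2]
  have hn : ∑ i, ξ i ^ 2 = ‖ξ‖ ^ 2 := by simp [EuclideanSpace.norm_sq_eq]
  have hi : ∑ i, (x - z) i * ξ i = inner ℝ (x - z) ξ := by
    simp [PiLp.inner_apply, mul_comm]
  rw [hn, hi]
  set A := ‖x - z‖ ^ 2 with hA
  set B := inner ℝ (x - z) ξ with hB
  set C := ‖ξ‖ ^ 2 with hC
  have hgT : ∀ y, g y - g x - fderiv ℝ g x (y - x) ≤ K0 * ‖y - x‖ ^ 2 := by
    intro y
    have := (convex_segment x y).norm_image_sub_le_of_norm_hasFDerivWithin_le'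
      (f := g) (f' := fderiv ℝ g) (φ := fderiv ℝ g x) (C := K0 * ‖y - x‖) (x := x) (y := y)
      (fun w _ => (hg.1 w).hasFDerivAt.hasFDerivWithinAt) (fun w hw => by
        refine (hg.2.2.2 w x).trans ?_
        have hK : 0 ≤ K0 := (abs_nonneg _).trans (hg.2.1 x)
        gcongr
        exact norm_sub_le_of_mem_segment hw)
      (left_mem_segment ℝ x y) (right_mem_segment ℝ x y)
    have := (le_abs_self _).trans this
    nlinarith
  have hψ : ∀ t : ℝ, psi l r z (x + t • ξ) =
      Real.exp (-l * r ^ 2) - Real.exp (-l * (A + 2 * B * t + C * t ^ 2)) := by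
    intro t
    unfold psi
    have : x + t • ξ - z = (x - z) + t • ξ := by abel
    rw [this, norm_add_sq_real, inner_smul_right, norm_smul, mul_pow, Real.norm_eq_abs, sq_abs]
    congr 3
    ring
  set k := κ ξ + fderiv ℝ g x ξ with hk
  have hline : ∀ t : ℝ, HasDerivAt (fun t : ℝ => x + t • ξ) ξ t := by
    intro t
    simpa using ((hasDerivAt_id t).smul_const ξ).const_add x
  have hnear : ∀ᶠ t in 𝓝 (0:ℝ), x + t • ξ ∈ G := by
    have : ContinuousAt (fun t : ℝ => x + t • ξ) 0 := (hline 0).continuousAt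
    exact this.eventually_mem (by simpa using hG.mem_nhds hx)
  have key := second_test
    (m := fun t => u (x + t • ξ) - K0 * C * t ^ 2 - k * t +
        N * Real.exp (-l * (A + 2 * B * t + C * t ^ 2)))
    (m' := fun t => fderiv ℝ u (x + t • ξ) ξ - K0 * C * (2 * t) - k +
        N * (Real.exp (-l * (A + 2 * B * t + C * t ^ 2)) * (-l * (2 * B + C * (2 * t)))))
    (m2 := fderiv ℝ (fderiv ℝ u) x ξ ξ - K0 * C * 2 +
        N * (Real.exp (-l * A) * (-l * (2 * B)) * (-l * (2 * B)) + Real.exp (-l * A) * (-l * (C * 2))))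
    ?_ ?_ ?_
  · linarith [key]
  · filter_upwards [hnear] with t ht
    have h1 := ((hud.differentiableAt (hG.mem_nhds ht)).hasFDerivAt).comp_hasDerivAt t (hline t)
    have h2 : HasDerivAt (fun t : ℝ => t ^ 2) (2 * t) t := by simpa using hasDerivAt_pow 2 t
    have h3 : HasDerivAt (fun t : ℝ => -l * (A + 2 * B * t + C * t ^ 2))
        (-l * (2 * B + C * (2 * t))) t := by
      have := ((((hasDerivAt_id t).const_mul (2 * B)).const_add A).add (h2.const_mul C)).const_mul (-l)
      simpa using this
    have h4 := ((h1.sub (h2.const_mul (K0 * C))).sub ((hasDerivAt_id t).const_mul k)).add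
      ((h3.exp).const_mul N)
    exact h4.congr_deriv (by simp)
  · have h1 : HasDerivAt (fun t : ℝ => fderiv ℝ u (x + t • ξ) ξ)
        (fderiv ℝ (fderiv ℝ u) x ξ ξ) 0 := by
      have hh : HasFDerivAt (fderiv ℝ u) (fderiv ℝ (fderiv ℝ u) x) (x + (0:ℝ) • ξ) := by
        simpa using hu2.hasFDerivAt
      have h := hh.comp_hasDerivAt (0:ℝ) (hline 0)
      have := h.clm_apply (hasDerivAt_const (0:ℝ) ξ)
      simpa using this
    have h2 : HasDerivAt (fun t : ℝ => t ^ 2) (2 * 0) (0:ℝ) := by simpa using hasDerivAt_pow 2 (0:ℝ)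
    have h3 : HasDerivAt (fun t : ℝ => -l * (A + 2 * B * t + C * t ^ 2))
        (-l * (2 * B + C * (2 * 0))) 0 := by
      have := ((((hasDerivAt_id (0:ℝ)).const_mul (2 * B)).const_add A).add (h2.const_mul C)).const_mul (-l)
      simpa using this
    have h5 : HasDerivAt (fun t : ℝ => -l * (2 * B + C * (2 * t))) (-l * (C * 2)) 0 := by
      have := (((((hasDerivAt_id (0:ℝ)).const_mul 2).const_mul C).const_add (2 * B))).const_mul (-l)
      simpa using this
    have h6 : HasDerivAt (fun t : ℝ => K0 * C * (2 * t)) (K0 * C * 2) 0 := by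
      simpa using ((hasDerivAt_id (0:ℝ)).const_mul 2).const_mul (K0 * C)
    have h4 := ((h1.sub h6).sub_const k).add (((h3.exp).mul h5).const_mul N)
    exact h4.congr_deriv (by simp)
  · filter_upwards [hnear] with t ht
    have h1 := hc _ ht
    have h2 := hgT (x + t • ξ)
    have e0 : psi l r z x = Real.exp (-l * r ^ 2) - Real.exp (-l * A) := by
      simpa using hψ 0
    rw [hψ, e0] at h1
    simp only [add_sub_cancel_left, map_smul, smul_eq_mul, norm_smul, mul_pow, Real.norm_eq_abs,
      sq_abs] at h1 h2
    simp only [zero_smul, add_zero, mul_zero, ne_eq, OfNat.ofNat_ne_zero, not_false_eq_true,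
      zero_pow, sub_zero]
    have e1 : K0 * (t ^ 2 * C) = K0 * C * t ^ 2 := by ring
    have e2 : k * t = t * κ ξ + t * fderiv ℝ g x ξ := by rw [hk]; ring
    rw [← hC] at h2
    linarith

/-- uniform exterior ball -/
lemma ext_ball {d : ℕ} {G : Set (E d)} (hG : IsC2Domain G) :
    ∃ r : ℝ, 0 < r ∧ r ≤ 1 ∧ ∀ y ∈ frontier G, ∃ z : E d, ‖y - z‖ = r ∧ ∀ x ∈ G, r ≤ ‖x - z‖ := by
  obtain ⟨ho, hb, -, -, ρ, hρ, hGρ, hgrad⟩ := hG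
  obtain ⟨R, hR⟩ := hb.closure.subset_closedBall 0
  have hfc : Continuous (fderiv ℝ ρ) := hρ.continuous_fderiv (by norm_num)
  have hcf : IsCompact (frontier G) :=
    hb.isCompact_closure.of_isClosed_subset isClosed_frontier frontier_subset_closure
  obtain ⟨m, hm, hmf⟩ : ∃ m > 0, ∀ y ∈ frontier G, m ≤ ‖fderiv ℝ ρ y‖ := by
    rcases (frontier G).eq_empty_or_nonempty with he | hne
    · exact ⟨1, one_pos, by simp [he]⟩
    · obtain ⟨y, hy, hmin⟩ := hcf.exists_isMinOn hne hfc.norm.continuousOn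
      exact ⟨‖fderiv ℝ ρ y‖, norm_pos_iff.2 (hgrad y hy), fun w hw => hmin hw⟩
  have hρ1 : ContDiff ℝ 1 (fderiv ℝ ρ) := hρ.fderiv_right (by norm_num)
  obtain ⟨M, hM0, hM⟩ : ∃ M > 0, ∀ w ∈ Metric.closedBall (0 : E d) R,
      ‖fderiv ℝ (fderiv ℝ ρ) w‖ ≤ M := by
    obtain ⟨M, hM⟩ := (isCompact_closedBall (0 : E d) R).exists_bound_of_continuousOn
      (hρ1.continuous_fderiv (by norm_num)).continuousOn
    exact ⟨max M 1, by positivity, fun w hw => (hM w hw).trans (le_max_left _ _)⟩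
  have hTay : ∀ x ∈ Metric.closedBall (0 : E d) R, ∀ y ∈ Metric.closedBall (0 : E d) R,
      |ρ x - ρ y - fderiv ℝ ρ y (x - y)| ≤ M * ‖x - y‖ ^ 2 := by
    intro x hx y hy
    have hseg : segment ℝ y x ⊆ Metric.closedBall (0 : E d) R :=
      (convex_closedBall _ _).segment_subset hy hx
    have := (convex_segment y x).norm_image_sub_le_of_norm_hasFDerivWithin_le'
      (f := ρ) (f' := fderiv ℝ ρ) (φ := fderiv ℝ ρ y) (C := M * ‖x - y‖) (x := y) (y := x)
      (fun w _ => (hρ.differentiable (by norm_num) w).hasFDerivAt.hasFDerivWithinAt) (fun w hw => by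
        have h := (convex_closedBall (0 : E d) R).norm_image_sub_le_of_norm_fderiv_le
          (f := fderiv ℝ ρ) (C := M) (x := y) (y := w)
          (fun w _ => hρ1.differentiable (by norm_num) w) hM hy (hseg hw)
        refine h.trans ?_
        gcongr
        exact norm_sub_le_of_mem_segment hw)
      (left_mem_segment ℝ y x) (right_mem_segment ℝ y x)
    rw [Real.norm_eq_abs] at this
    refine this.trans (le_of_eq (by ring))
  refine ⟨min 1 (m / (2 * M)), lt_min one_pos (by positivity), min_le_left _ _, ?_⟩
  set r := min 1 (m / (2 * M)) with hr
  have hr0 : 0 < r := lt_min one_pos (by positivity)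
  have hrM : 2 * r * M ≤ m := by
    have : r ≤ m / (2 * M) := min_le_right _ _
    rw [le_div_iff₀ (by positivity)] at this
    linarith
  intro y hy
  set p : E d := (InnerProductSpace.toDual ℝ (E d)).symm (fderiv ℝ ρ y) with hp
  have hpn : ‖p‖ = ‖fderiv ℝ ρ y‖ := LinearIsometryEquiv.norm_map _ _
  have hpin : ∀ v, inner ℝ p v = fderiv ℝ ρ y v := fun v =>
    InnerProductSpace.toDual_symm_apply
  have hpm : m ≤ ‖p‖ := hpn ▸ hmf y hy
  have hp0 : 0 < ‖p‖ := hm.trans_le hpm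
  refine ⟨y + (r / ‖p‖) • p, ?_, ?_⟩
  · rw [sub_add_cancel_left, norm_neg, norm_smul, Real.norm_of_nonneg (by positivity)]
    field_simp
  · intro x hx
    by_contra hlt
    push Not at hlt
    have e1 : x - (y + (r / ‖p‖) • p) = (x - y) - (r / ‖p‖) • p := by abel
    have h1 : ‖x - (y + (r / ‖p‖) • p)‖ ^ 2 < r ^ 2 := by gcongr
    rw [e1, norm_sub_sq_real, inner_smul_right, norm_smul, Real.norm_of_nonneg (by positivity),
      real_inner_comm, hpin] at h1
    have e2 : r / ‖p‖ * ‖p‖ = r := by field_simp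
    rw [e2] at h1
    have h2 := (abs_le.1 (hTay x (hR (subset_closure hx)) y (hR (frontier_subset_closure hy)))).1
    have hxneg : ρ x < 0 := by rw [hGρ] at hx; exact hx
    have hypos : 0 ≤ ρ y := by
      by_contra hn
      push Not at hn
      have : y ∈ G := by rw [hGρ]; exact hn
      rw [ho.frontier_eq] at hy
      exact hy.2 this
    set q := fderiv ℝ ρ y (x - y)
    set s := ‖x - y‖ ^ 2
    have h3 : q < M * s := by linarith
    have hs : 0 ≤ s := by positivity
    have h4 : s < 2 * (r / ‖p‖ * q) := by linarith
    have h5 : r / ‖p‖ * q ≤ r / ‖p‖ * (M * s) := by gcongr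
    have h6 : 2 * (r / ‖p‖ * (M * s)) ≤ s := by
      have : r / ‖p‖ * M ≤ 1 / 2 := by
        rw [div_mul_eq_mul_div, div_le_iff₀ hp0]; linarith
      nlinarith
    linarith

lemma P_upper {d : ℕ} {δ K : ℝ} {P : (Fin d → Fin d → ℝ) → (Fin d → ℝ) → ℝ → ℝ}
    (hP : PAssump δ K P) (m : Fin d → Fin d → ℝ) (v : Fin d → ℝ) (s t : ℝ)
    (h : ∀ a b c, Cls δ K a b c →
      (∑ i, ∑ j, a i j * m i j) + (∑ i, b i * v i) - c * s ≤ t) : P m v s ≤ t := by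
  obtain ⟨-, hom, ⟨C, hC⟩, hder⟩ := hP
  set Q : (Fin d → Fin d → ℝ) × (Fin d → ℝ) × ℝ → ℝ := fun q => P q.1 q.2.1 q.2.2 with hQ
  have hdense : Dense {p | DifferentiableAt ℝ Q p} :=
    Measure.dense_of_ae (hC.ae_differentiableAt (μ := Measure.addHaar))
  have hlin : ∀ p, DifferentiableAt ℝ Q p → fderiv ℝ Q p (m, v, s) ≤ t := by
    intro p hp
    obtain ⟨h1, h2, h3, h4⟩ := hder p hp
    have hh := h _ _ (-(fderiv ℝ Q p (0, 0, 1))) ⟨h1, h2, by linarith, by linarith⟩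
    refine le_trans (le_of_eq ?_) hh
    have em : (m, v, s) = (∑ i, ∑ j, m i j • ((Pi.single i (Pi.single j (1:ℝ)), 0, 0) :
        (Fin d → Fin d → ℝ) × (Fin d → ℝ) × ℝ)) + (∑ i, v i • ((0, Pi.single i (1:ℝ), 0) :
        (Fin d → Fin d → ℝ) × (Fin d → ℝ) × ℝ)) + s • ((0, 0, 1) :
        (Fin d → Fin d → ℝ) × (Fin d → ℝ) × ℝ) := by
      refine Prod.ext ?_ (Prod.ext ?_ ?_)
      · ext i j
        simp [Prod.fst_sum, Finset.sum_apply, Pi.single_apply]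
      · ext i
        simp [Prod.fst_sum, Prod.snd_sum, Finset.sum_apply, Pi.single_apply]
      · simp [Prod.snd_sum]
    rw [em]
    simp only [map_add, map_sum, map_smul, smul_eq_mul]
    have e1 : ∀ i j, m i j * fderiv ℝ Q p (Pi.single i (Pi.single j 1), 0, 0) =
      fderiv ℝ Q p (Pi.single i (Pi.single j 1), 0, 0) * m i j := fun i j => mul_comm _ _
    have e2 : ∀ i, v i * fderiv ℝ Q p (0, Pi.single i 1, 0) =
      fderiv ℝ Q p (0, Pi.single i 1, 0) * v i := fun i => mul_comm _ _
    simp only [e1, e2]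
    ring
  have hEuler : ∀ p, DifferentiableAt ℝ Q p → Q p = fderiv ℝ Q p p := by
    intro p hp
    have h1 : HasDerivAt (fun τ : ℝ => τ • p) p 1 := by
      simpa using (hasDerivAt_id (1:ℝ)).smul_const p
    have hp' : HasFDerivAt Q (fderiv ℝ Q p) ((1:ℝ) • p) := by simpa using hp.hasFDerivAt
    have h2 := hp'.comp_hasDerivAt (1:ℝ) h1
    have h3 : (Q ∘ fun τ : ℝ => τ • p) =ᶠ[𝓝 1] fun τ => τ * Q p := by
      filter_upwards [lt_mem_nhds (zero_lt_one' ℝ)] with τ hτ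
      exact hom τ hτ.le _ _ _
    have h4 : HasDerivAt (fun τ : ℝ => τ * Q p) (Q p) 1 := by
      simpa using (hasDerivAt_id (1:ℝ)).mul_const (Q p)
    exact h4.unique (h2.congr_of_eventuallyEq h3.symm)
  have hmain : ∀ p, DifferentiableAt ℝ Q p → Q (m, v, s) ≤ t + 2 * C * ‖p - (m, v, s)‖ := by
    intro p hp
    have h1 := hlin p hp
    have h2 := hEuler p hp
    have h3 : |fderiv ℝ Q p (p - (m, v, s))| ≤ C * ‖p - (m, v, s)‖ :=
      (fderiv ℝ Q p).le_of_opNorm_le (norm_fderiv_le_of_lipschitz ℝ hC) _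
    have h4 := hC.norm_sub_le p (m, v, s)
    rw [Real.norm_eq_abs] at h4
    rw [map_sub] at h3
    have := (abs_le.1 h3).2
    have := (abs_le.1 h4).1
    linarith
  have hz : Q (m, v, s) = P m v s := rfl
  rw [← hz]
  refine le_of_forall_pos_le_add fun ε hε => ?_
  obtain ⟨p, hp, hd⟩ := Metric.dense_iff.1 hdense (m, v, s) (ε / (2 * C + 1)) (by positivity)
  rw [Metric.mem_ball, dist_eq_norm, lt_div_iff₀ (by positivity)] at hp
  have := hmain p hd
  have : 0 ≤ ‖p - (m, v, s)‖ := norm_nonneg _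
  linarith

lemma locLip_w {d : ℕ} {G : Set (E d)} (hG : IsOpen G) {K0 N l r : ℝ} {z : E d} {u g : E d → ℝ}
    (hg : C11Bound K0 g) (hud : DifferentiableOn ℝ u G) (hul : LocLip G u) :
    LocLip G (fun x => u x - g x - N * psi l r z x) := by
  intro x hx
  obtain ⟨ρ, hρ, hb, C, hC⟩ := hul x hx
  have hψ1 : ContDiff ℝ 1 (fderiv ℝ (psi l r z)) :=
    (psi_contDiff l r z).fderiv_right (by norm_num)
  obtain ⟨C2, t, ht, hC2⟩ := hψ1.contDiffAt (x := x) |>.exists_lipschitzOnWith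
  obtain ⟨ρ2, hρ2, hb2⟩ := Metric.mem_nhds_iff.1 ht
  have hK : 0 ≤ K0 := (abs_nonneg _).trans (hg.2.1 x)
  have hgl : LipschitzWith K0.toNNReal (fderiv ℝ g) := by
    refine LipschitzWith.of_dist_le_mul fun y w => ?_
    rw [dist_eq_norm, dist_eq_norm, Real.coe_toNNReal _ hK]
    exact hg.2.2.2 y w
  have s1 : Metric.ball x (min ρ ρ2) ⊆ Metric.ball x ρ := Metric.ball_subset_ball (min_le_left _ _)
  have s2 : Metric.ball x (min ρ ρ2) ⊆ t :=
    (Metric.ball_subset_ball (min_le_right _ _)).trans hb2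
  have key : LipschitzOnWith (C + K0.toNNReal + ‖N‖₊ * C2)
      (fun y => fderiv ℝ u y - fderiv ℝ g y - N • fderiv ℝ (psi l r z) y)
      (Metric.ball x (min ρ ρ2)) := by
    refine LipschitzOnWith.of_dist_le_mul fun y hy w hw => ?_
    have h1 := hC.dist_le_mul y (s1 hy) w (s1 hw)
    have h2 := hgl.dist_le_mul y w
    have h3 := hC2.dist_le_mul y (s2 hy) w (s2 hw)
    rw [dist_eq_norm] at h1 h2 h3 ⊢
    have e : fderiv ℝ u y - fderiv ℝ g y - N • fderiv ℝ (psi l r z) y -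
        (fderiv ℝ u w - fderiv ℝ g w - N • fderiv ℝ (psi l r z) w) =
        (fderiv ℝ u y - fderiv ℝ u w) - (fderiv ℝ g y - fderiv ℝ g w)
          - N • (fderiv ℝ (psi l r z) y - fderiv ℝ (psi l r z) w) := by
      rw [smul_sub]; abel
    rw [e]
    refine (norm_sub_le _ _).trans ?_
    refine (add_le_add (norm_sub_le _ _) le_rfl).trans ?_
    rw [norm_smul]
    push_cast
    have := mul_le_mul_of_nonneg_left h3 (norm_nonneg N)
    linarith
  refine ⟨min ρ ρ2, lt_min hρ hρ2, s1.trans hb, C + K0.toNNReal + ‖N‖₊ * C2, ?_⟩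
  have hcg : ∀ y ∈ Metric.ball x (min ρ ρ2), fderiv ℝ (fun x => u x - g x - N * psi l r z x) y =
      fderiv ℝ u y - fderiv ℝ g y - N • fderiv ℝ (psi l r z) y := by
    intro y hy
    have hyG : y ∈ G := hb (s1 hy)
    exact (((hud.differentiableAt (hG.mem_nhds hyG)).hasFDerivAt.sub (hg.1 y).hasFDerivAt).sub
    (((psi_contDiff l r z).differentiable (by norm_num) y).hasFDerivAt.const_mul N)).fderiv
  intro y hy w hw
  rw [hcg y hy, hcg w hw]
  exact key hy hw

lemma psi_le {l r s : ℝ} (hl : 0 ≤ l) (hr : 0 ≤ r) (hs : r ≤ s) :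
    0 ≤ Real.exp (-l * r ^ 2) - Real.exp (-l * s ^ 2) ∧
    Real.exp (-l * r ^ 2) - Real.exp (-l * s ^ 2) ≤ l * (s ^ 2 - r ^ 2) := by
  have h1 : r ^ 2 ≤ s ^ 2 := by gcongr
  have h2 : l * r ^ 2 ≤ l * s ^ 2 := by gcongr
  constructor
  · have : Real.exp (-l * s ^ 2) ≤ Real.exp (-l * r ^ 2) := Real.exp_le_exp.2 (by linarith)
    linarith
  · have e : Real.exp (-l * s ^ 2) = Real.exp (-l * r ^ 2) * Real.exp (-(l * (s ^ 2 - r ^ 2))) := by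
      rw [← Real.exp_add]; congr 1; ring
    have h3 := Real.add_one_le_exp (-(l * (s ^ 2 - r ^ 2)))
    have h4 : Real.exp (-l * r ^ 2) ≤ 1 := Real.exp_le_one_iff.2 (by nlinarith [sq_nonneg r])
    have h5 := Real.exp_pos (-l * r ^ 2)
    rw [e]
    have h6 : 0 ≤ l * (s ^ 2 - r ^ 2) := by linarith
    nlinarith

set_option maxHeartbeats 800000 in
lemma main_bound {d : ℕ} {G : Set (E d)} (hG : IsC2Domain G) (hne : G ≠ univ) {δ K K0 : ℝ}
    (hδ : 0 < δ) (hK : 0 ≤ K) (hK0 : 0 ≤ K0) :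
    ∃ N : ℝ, 0 < N ∧ ∀ g : E d → ℝ, C11Bound K0 g → ∀ u : E d → ℝ, ContinuousOn u (closure G) →
      EqOn u g (frontier G) → DifferentiableOn ℝ u G → LocLip G u →
      ∀ Z : Set (E d), volume Z = 0 → ∀ x1 ∈ G, N * Metric.infDist x1 Gᶜ < u x1 - g x1 →
      ∃ x ∈ G, x ∉ Z ∧ ∀ a b c, Cls δ K a b c →
        (∑ i, ∑ j, a i j * D2 u x i j) + (∑ i, b i * D1 u x i) - c * u x ≤ -(K0 + 1) := by
  obtain ⟨r, hr0, hr1, hball⟩ := ext_ball hG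
  have ho : IsOpen G := hG.1
  have hb : Bornology.IsBounded G := hG.2.1
  obtain ⟨R, hR0, hR⟩ : ∃ R > 0, ∀ x ∈ closure G, ∀ y ∈ closure G, ‖x - y‖ + 1 ≤ R := by
    obtain ⟨C, hC⟩ := Metric.isBounded_iff.1 hb.closure
    obtain ⟨x0, hx0⟩ := hG.2.2.1
    have h0 := hC (subset_closure hx0) (subset_closure hx0)
    rw [dist_self] at h0
    refine ⟨C + 1, by linarith, fun x hx y hy => ?_⟩
    have := hC hx hy
    rw [dist_eq_norm] at this
    linarith
  set l : ℝ := (d * δ⁻¹ + R * K + 1) / (2 * δ * r ^ 2) with hl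
  have hl0 : 0 < l := by positivity
  have hlr : 2 * l * δ * r ^ 2 = d * δ⁻¹ + R * K + 1 := by
    rw [hl]; field_simp
  set C0 : ℝ := 2 * K0 * (d * δ⁻¹) + 2 * K * K0 + K with hC0
  have hC00 : 0 ≤ C0 := by positivity
  set N1 : ℝ := (C0 + K0 + 1) / (2 * l * Real.exp (-l * R ^ 2)) with hN1
  have hN10 : 0 < N1 := by positivity
  have hN1e : N1 * (2 * l * Real.exp (-l * R ^ 2)) = C0 + K0 + 1 := by
    rw [hN1]; field_simp
  refine ⟨N1 * (l * (2 * R)), by positivity, ?_⟩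
  intro g hg u huc hub hud hul Z hZ x1 hx1 hlt
  obtain ⟨y, hyf, hyd⟩ := exists_mem_frontier_infDist_compl_eq_dist hx1 hne
  obtain ⟨z, hyz, hzG⟩ := hball y hyf
  have hzcl : ∀ x ∈ closure G, r ≤ ‖x - z‖ := by
    have hcl : IsClosed {x : E d | r ≤ ‖x - z‖} :=
      isClosed_le continuous_const (continuous_id.sub continuous_const).norm
    exact fun x hx => closure_minimal (fun x hx => hzG x hx) hcl hx
  have hzR : ∀ x ∈ closure G, ‖x - z‖ ≤ R := by
    intro x hx
    have := norm_sub_le_norm_sub_add_norm_sub x y z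
    have := hR x hx y (frontier_subset_closure hyf)
    linarith
  have hψ0 : ∀ x ∈ closure G, 0 ≤ psi l r z x := fun x hx => (psi_le hl0.le hr0.le (hzcl x hx)).1
  have hψ1 : psi l r z x1 ≤ l * (2 * R) * Metric.infDist x1 Gᶜ := by
    have hx1c := subset_closure hx1
    refine (psi_le hl0.le hr0.le (hzcl x1 hx1c)).2.trans ?_
    rw [hyd, dist_eq_norm]
    have h1 := norm_sub_le_norm_sub_add_norm_sub x1 y z
    have h2 := hzR x1 hx1c
    have h3 := hzcl x1 hx1c
    have h4 : ‖x1 - z‖ ^ 2 - r ^ 2 ≤ 2 * R * ‖x1 - y‖ := by nlinarith [norm_nonneg (x1 - y)]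
    calc _ ≤ l * (2 * R * ‖x1 - y‖) := by gcongr
      _ = _ := by ring
  have hψc : Continuous (psi l r z) := (psi_contDiff l r z).continuous
  obtain ⟨x, hxG, hxZ, hwx, hDw, hcont⟩ := abp ho hb
    (w := fun x => u x - g x - N1 * psi l r z x)
    ((huc.sub hg.1.continuous.continuousOn).sub (continuous_const.mul hψc).continuousOn)
    (fun x hx => by
      have h1 := hub hx
      have h2 := mul_nonneg hN10.le (hψ0 x (frontier_subset_closure hx))
      simp only [h1]; linarith)
    ((hud.sub hg.1.differentiableOn).sub
      (((psi_contDiff l r z).differentiable (by norm_num)).const_mul N1).differentiableOn)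
    (locLip_w ho hg hud hul) hx1
    (by
      have := mul_le_mul_of_nonneg_left hψ1 hN10.le
      linarith)
    (measure_union_null hZ (ae_diff hul)) one_pos
  simp only [mem_union, not_or, mem_ofPred_eq, not_and, not_not] at hxZ
  refine ⟨x, hxG, hxZ.1, ?_⟩
  intro a b c ⟨ha, hbn, hc0, hcK⟩
  have hu2 := hxZ.2 hxG
  set κ := fderiv ℝ (fun x => u x - g x - N1 * psi l r z x) x with hκ
  set e := Real.exp (-l * ‖x - z‖ ^ 2) with he
  have he0 : 0 < e := Real.exp_pos _
  have hxc := subset_closure hxG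
  have heR : Real.exp (-l * R ^ 2) ≤ e := by
    refine Real.exp_le_exp.2 ?_
    have : ‖x - z‖ ^ 2 ≤ R ^ 2 := by gcongr; exact hzR x hxc
    have := mul_le_mul_of_nonneg_left this hl0.le
    linarith
  have hH := contact ho hg hud hxG hu2 hcont
  have hA := lin_le (s := 2 * K0 + N1 * (2 * l * e)) (t := N1 * (4 * l ^ 2 * e)) (y := (x - z).ofLp)
    hδ (by positivity) (by positivity) ha
    (H := fun i j => D2 u x i j) (fun ξ => hH (WithLp.toLp 2 ξ))
  have hn : ∑ i, (x - z) i ^ 2 = ‖x - z‖ ^ 2 := by simp [EuclideanSpace.norm_sq_eq]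
  rw [hn] at hA
  rw [D1_lin]
  rw [vecNorm_eq] at hbn
  set β : E d := WithLp.toLp 2 b with hβ
  have hfd : κ = fderiv ℝ u x - fderiv ℝ g x - N1 • ((2 * l * e) • innerSL ℝ (x - z)) :=
    (((hud.differentiableAt (ho.mem_nhds hxG)).hasFDerivAt.sub (hg.1 x).hasFDerivAt).sub
    ((psi_fderiv l r z x).const_mul N1)).fderiv
  have hfβ : fderiv ℝ u x β = κ β + fderiv ℝ g x β + N1 * (2 * l * e) * inner ℝ (x - z) β := by
    rw [hfd]; simp only [sub_apply, smul_apply, innerSL_apply_apply, smul_eq_mul]; ring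
  have h1 : κ β ≤ K := by
    have := (le_abs_self _).trans (κ.le_of_opNorm_le hDw β)
    linarith
  have h2 : fderiv ℝ g x β ≤ K * K0 := by
    have hgn : ‖fderiv ℝ g x‖ ≤ K0 := by
      have hgl : LipschitzWith K0.toNNReal g := by
        refine LipschitzWith.of_dist_le_mul fun y w => ?_
        rw [dist_eq_norm, dist_eq_norm, Real.coe_toNNReal _ hK0]
        exact hg.2.2.1 y w
      have := norm_fderiv_le_of_lipschitz ℝ hgl (x₀ := x)
      rwa [Real.coe_toNNReal _ hK0] at this
    have := (le_abs_self _).trans ((fderiv ℝ g x).le_of_opNorm_le hgn β)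
    have h22 := mul_le_mul_of_nonneg_left hbn hK0
    linarith
  have h3 : inner ℝ (x - z) β ≤ R * K := by
    refine (real_inner_le_norm _ _).trans ?_
    have := hzR x hxc
    gcongr
  have h4 : N1 * (2 * l * e) * inner ℝ (x - z) β ≤ N1 * (2 * l * e) * (R * K) := by gcongr
  have h5 : -(c * u x) ≤ K * K0 := by
    have hux : -K0 ≤ u x := by
      have := mul_nonneg hN10.le (hψ0 x hxc)
      have := (abs_le.1 (hg.2.1 x)).1
      linarith
    have h51 := mul_le_mul_of_nonneg_left hux hc0
    have h52 := mul_le_mul_of_nonneg_right hcK hK0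
    linarith
  have h6 : r ^ 2 ≤ ‖x - z‖ ^ 2 := by gcongr; exact hzcl x hxc
  have h7 : N1 * (2 * l * e) * (d * δ⁻¹ + R * K - 2 * l * δ * ‖x - z‖ ^ 2) ≤
      N1 * (2 * l * e) * (-1) := by
    have h8 : 2 * l * δ * r ^ 2 ≤ 2 * l * δ * ‖x - z‖ ^ 2 := by gcongr
    have : d * δ⁻¹ + R * K - 2 * l * δ * ‖x - z‖ ^ 2 ≤ -1 := by linarith
    gcongr
  have h9 : N1 * (2 * l * Real.exp (-l * R ^ 2)) ≤ N1 * (2 * l * e) := by gcongr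
  rw [hfβ]
  have hA' : (2 * K0 + N1 * (2 * l * e)) * (d * δ⁻¹) - N1 * (4 * l ^ 2 * e) * (δ * ‖x - z‖ ^ 2)
     = 2 * K0 * (d * δ⁻¹) + N1 * (2 * l * e) * (d * δ⁻¹ + R * K - 2 * l * δ * ‖x - z‖ ^ 2)
       - N1 * (2 * l * e) * (R * K) := by ring
  rw [hA'] at hA
  linarith

lemma L_bdd {d : ℕ} {A B : Type} [MetricSpace A] [MetricSpace B] {δ K0 γ : ℝ} {ω : ℝ → ℝ}
    {a : A → B → E d → Fin d → Fin d → ℝ} {b : A → B → E d → Fin d → ℝ}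
    {c f : A → B → E d → ℝ} (h : CoeffAssump δ K0 γ ω a b c f) (u : E d → ℝ) (x : E d) :
    ∃ C, ∀ α β, |Lop a b c α β u x + f α β x| ≤ C := by
  obtain ⟨-, ha, hb, hc, hf, -⟩ := h
  refine ⟨(∑ i, ∑ j, K0 * |D2 u x i j|) + (∑ i, K0 * |D1 u x i|) + K0 * |u x| + K0,
    fun α β => ?_⟩
  have h1 : |∑ i, ∑ j, a α β x i j * D2 u x i j| ≤ ∑ i, ∑ j, K0 * |D2 u x i j| := by
    refine (Finset.abs_sum_le_sum_abs _ _).trans (Finset.sum_le_sum fun i _ => ?_)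
    refine (Finset.abs_sum_le_sum_abs _ _).trans (Finset.sum_le_sum fun j _ => ?_)
    rw [abs_mul]
    refine mul_le_mul_of_nonneg_right (le_trans ?_ (ha α β x)) (abs_nonneg _)
    refine Real.le_sqrt_of_sq_le ?_
    rw [sq_abs]
    refine le_trans ?_ (Finset.single_le_sum (f := fun i => ∑ j, a α β x i j ^ 2)
      (fun i _ => by positivity) (Finset.mem_univ i))
    exact Finset.single_le_sum (f := fun j => a α β x i j ^ 2)
      (fun i _ => by positivity) (Finset.mem_univ j)
  have h2 : |∑ i, b α β x i * D1 u x i| ≤ ∑ i, K0 * |D1 u x i| := by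
    refine (Finset.abs_sum_le_sum_abs _ _).trans (Finset.sum_le_sum fun i _ => ?_)
    rw [abs_mul]
    refine mul_le_mul_of_nonneg_right (le_trans ?_ (hb α β x)) (abs_nonneg _)
    refine Real.le_sqrt_of_sq_le ?_
    rw [sq_abs]
    exact Finset.single_le_sum (f := fun i => b α β x i ^ 2)
      (fun i _ => by positivity) (Finset.mem_univ i)
  have h3 : |c α β x * u x| ≤ K0 * |u x| := by
    rw [abs_mul, abs_of_nonneg (hc α β x).1]
    exact mul_le_mul_of_nonneg_right (hc α β x).2 (abs_nonneg _)
  have h4 := hf α β x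
  unfold Lop
  rw [abs_le] at *
  constructor <;> linarith [h1.1, h1.2, h2.1, h2.2, h3.1, h3.2, h4.1, h4.2]

lemma F_le {d : ℕ} {A B : Type} [MetricSpace A] [MetricSpace B] [Nonempty A] [Nonempty B]
    {δ K0 γ : ℝ} {ω : ℝ → ℝ}
    {a : A → B → E d → Fin d → Fin d → ℝ} {b : A → B → E d → Fin d → ℝ}
    {c f : A → B → E d → ℝ} (h : CoeffAssump δ K0 γ ω a b c f) (u : E d → ℝ) (x : E d)
    (hL : ∀ α β, Lop a b c α β u x + f α β x ≤ -1) : Fop a b c f u x ≤ -1 := by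
  obtain ⟨C, hC⟩ := L_bdd h u x
  refine ciSup_le fun α => ?_
  have β : B := Classical.arbitrary B
  refine (ciInf_le ⟨-C, ?_⟩ β).trans (hL α β)
  rintro _ ⟨β, rfl⟩
  exact (abs_le.1 (hC α β)).1

lemma le_F {d : ℕ} {A B : Type} [MetricSpace A] [MetricSpace B] [Nonempty A] [Nonempty B]
    {δ K0 γ : ℝ} {ω : ℝ → ℝ}
    {a : A → B → E d → Fin d → Fin d → ℝ} {b : A → B → E d → Fin d → ℝ}
    {c f : A → B → E d → ℝ} (h : CoeffAssump δ K0 γ ω a b c f) (u : E d → ℝ) (x : E d)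
    (hL : ∀ α β, 1 ≤ Lop a b c α β u x + f α β x) : 1 ≤ Fop a b c f u x := by
  obtain ⟨C, hC⟩ := L_bdd h u x
  have α : A := Classical.arbitrary A
  refine le_trans (le_ciInf fun β => hL α β) (le_ciSup
    (f := fun α => ⨅ β : B, (Lop a b c α β u x + f α β x)) ⟨C, ?_⟩ α)
  rintro _ ⟨α, rfl⟩
  have β : B := Classical.arbitrary B
  refine (ciInf_le ⟨-C, ?_⟩ β).trans (abs_le.1 (hC α β)).2
  rintro _ ⟨β, rfl⟩
  exact (abs_le.1 (hC α β)).1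

lemma D1_neg {d : ℕ} (u : E d → ℝ) (x : E d) (i : Fin d) :
    D1 (fun y => -(u y)) x i = -(D1 u x i) := by
  simp [D1, fderiv_fun_neg]

lemma D2_neg {d : ℕ} (u : E d → ℝ) (x : E d) (i j : Fin d) :
    D2 (fun y => -(u y)) x i j = -(D2 u x i j) := by
  simp [D2, fderiv_fun_neg]

lemma C11_neg {d : ℕ} {K0 : ℝ} {g : E d → ℝ} (hg : C11Bound K0 g) :
    C11Bound K0 (fun y => -(g y)) := by
  refine ⟨hg.1.neg, fun x => by simpa using hg.2.1 x, fun x y => ?_, fun x y => ?_⟩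
  · have := hg.2.2.1 y x
    rw [norm_sub_rev] at this
    convert this using 2
    ring
  · rw [fderiv_fun_neg, fderiv_fun_neg, neg_sub_neg, norm_sub_rev]
    exact hg.2.2.2 x y

lemma locLip_neg {d : ℕ} {G : Set (E d)} {u : E d → ℝ} (hu : LocLip G u) :
    LocLip G (fun y => -(u y)) := by
  intro x hx
  obtain ⟨r, hr, hb, C, hC⟩ := hu x hx
  refine ⟨r, hr, hb, C, fun y hy w hw => ?_⟩
  rw [fderiv_fun_neg, fderiv_fun_neg, edist_neg_neg]
  exact hC hy hw

theorem statement1 {d : ℕ} (δ K0 χ γ δhat K1 : ℝ) (G : Set (E d))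
    (P : (Fin d → Fin d → ℝ) → (Fin d → ℝ) → ℝ → ℝ) :
    ∃ N : ℝ, 0 < N ∧
      ∀ (A B : Type) [MetricSpace A] [MetricSpace B],
      ∀ (ω : ℝ → ℝ) (a : A → B → E d → Fin d → Fin d → ℝ)
        (b : A → B → E d → Fin d → ℝ) (c f : A → B → E d → ℝ) (g : E d → ℝ),
        Setting δ K0 χ γ δhat K1 ω a b c f G g P → ModulusAssump χ ω →
        ∀ K : ℝ, 0 ≤ K → ∀ uK vK : E d → ℝ,
          IsUSol a b c f G g P K uK → IsVSol a b c f G g P K vK →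
          ∀ x ∈ G,
            |uK x - g x| + |vK x - g x| ≤ N * Metric.infDist x Gᶜ ∧
            |uK x| + |vK x| ≤ N := by
  by_cases hyp : 1 ≤ d ∧ 0 ≤ K0 ∧ 0 < δhat ∧ K0 ≤ K1 ∧ IsC2Domain G
  swap
  · refine ⟨1, one_pos, ?_⟩
    intro A B _ _ ω a b c f g hS
    obtain ⟨h1, h2, h3, h4, h5, h6, h7, h8, h9, h10, h11, h12, h13, h14, h15, h16, h17, h18⟩ := hS
    exact absurd ⟨h1, h4, h8, h10, h16⟩ hyp
  obtain ⟨hd, hK0, hδh, hK01, hG⟩ := hyp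
  have hb : Bornology.IsBounded G := hG.2.1
  have hne : G ≠ univ := by
    rintro rfl
    have : Nonempty (Fin d) := ⟨⟨0, hd⟩⟩
    exact NormedSpace.unbounded_univ ℝ (E d) hb
  obtain ⟨N0, hN0, hmain⟩ := main_bound hG hne (δ := δhat) (K := K1) hδh (hK0.trans hK01) hK0
  obtain ⟨R, hR0, hR⟩ : ∃ R > 0, ∀ x ∈ G, Metric.infDist x Gᶜ ≤ R := by
    obtain ⟨C, hC⟩ := Metric.isBounded_iff.1 hb.closure
    refine ⟨max C 1, by positivity, fun x hx => ?_⟩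
    obtain ⟨y, hyf, hyd⟩ := exists_mem_frontier_infDist_compl_eq_dist hx hne
    rw [hyd]
    exact (hC (subset_closure hx) (frontier_subset_closure hyf)).trans (le_max_left _ _)
  refine ⟨2 * N0 + 2 * (N0 * R + K0), by positivity, ?_⟩
  intro A B _ _ ω a b c f g hS hω K hK u v hu hv
  obtain ⟨-, hδ, -, -, -, -, -, -, hδδ, -, hA, hB, -, -, hco, -, hg, hP⟩ := hS
  have hcls : ∀ α β x, Cls δhat K1 (a α β x) (b α β x) (c α β x) := fun α β x =>
    ⟨memS_mono hδh hδδ.le (hco.1 α β x), (hco.2.2.1 α β x).trans hK01,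
      (hco.2.2.2.1 α β x).1, (hco.2.2.2.1 α β x).2.trans hK01⟩
  have hf : ∀ α β x, |f α β x| ≤ K0 := hco.2.2.2.2.1
  -- consequences of the linear inequality
  have cF : ∀ (w : E d → ℝ) (x : E d), (∀ a b c, Cls δhat K1 a b c →
        (∑ i, ∑ j, a i j * D2 w x i j) + (∑ i, b i * D1 w x i) - c * w x ≤ -(K0 + 1)) →
        Fop a b c f w x ≤ -1 := by
    intro w x h
    refine F_le hco w x fun α β => ?_
    have h1 := h _ _ _ (hcls α β x)
    have h2 := (abs_le.1 (hf α β x)).2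
    unfold Lop
    linarith
  have cF' : ∀ (w : E d → ℝ) (x : E d), (∀ a b c, Cls δhat K1 a b c →
        (∑ i, ∑ j, a i j * D2 (fun y => -(w y)) x i j) +
        (∑ i, b i * D1 (fun y => -(w y)) x i) - c * (-(w x)) ≤ -(K0 + 1)) →
        1 ≤ Fop a b c f w x := by
    intro w x h
    refine le_F hco w x fun α β => ?_
    have h1 := h _ _ _ (hcls α β x)
    have h2 := (abs_le.1 (hf α β x)).1
    simp only [D1_neg, D2_neg, mul_neg, Finset.sum_neg_distrib] at h1
    unfold Lop
    linarith
  have cP : ∀ (w : E d → ℝ) (x : E d), (∀ a b c, Cls δhat K1 a b c →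
        (∑ i, ∑ j, a i j * D2 w x i j) + (∑ i, b i * D1 w x i) - c * w x ≤ -(K0 + 1)) →
        Pop P w x ≤ -(K0 + 1) := fun w x h => P_upper hP _ _ _ _ h
  obtain ⟨uc, ub, ud, ul, ue⟩ := hu
  obtain ⟨vc, vb, vd, vl, ve⟩ := hv
  have ng := C11_neg hg
  intro x hx
  have u1 : u x - g x ≤ N0 * Metric.infDist x Gᶜ := by
    by_contra hlt
    push Not at hlt
    obtain ⟨y, hy, hyZ, hL⟩ := hmain g hg u uc ub ud ul _ (ae_iff.1 ue) x hx hlt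
    simp only [mem_ofPred_eq, not_not] at hyZ
    have h1 := hyZ hy
    have h2 := cF u y hL
    have h3 := cP u y hL
    have : max (Fop a b c f u y) (Pop P u y - K) < 0 := max_lt (by linarith) (by linarith)
    linarith
  have u2 : -(u x) - -(g x) ≤ N0 * Metric.infDist x Gᶜ := by
    by_contra hlt
    push Not at hlt
    obtain ⟨y, hy, hyZ, hL⟩ := hmain _ ng (fun y => -(u y)) uc.neg
      (fun y hy => by simp only [ub hy]) ud.neg (locLip_neg ul) _ (ae_iff.1 ue) x hx hlt
    simp only [mem_ofPred_eq, not_not] at hyZ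
    have h1 := hyZ hy
    have h2 := cF' u y hL
    have := le_max_left (Fop a b c f u y) (Pop P u y - K)
    linarith
  have v1 : v x - g x ≤ N0 * Metric.infDist x Gᶜ := by
    by_contra hlt
    push Not at hlt
    obtain ⟨y, hy, hyZ, hL⟩ := hmain g hg v vc vb vd vl _ (ae_iff.1 ve) x hx hlt
    simp only [mem_ofPred_eq, not_not] at hyZ
    have h1 := hyZ hy
    have h2 := cF v y hL
    have := min_le_left (Fop a b c f v y) (-(Pop P (fun y => -(v y)) y) + K)
    linarith
  have v2 : -(v x) - -(g x) ≤ N0 * Metric.infDist x Gᶜ := by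
    by_contra hlt
    push Not at hlt
    obtain ⟨y, hy, hyZ, hL⟩ := hmain _ ng (fun y => -(v y)) vc.neg
      (fun y hy => by simp only [vb hy]) vd.neg (locLip_neg vl) _ (ae_iff.1 ve) x hx hlt
    simp only [mem_ofPred_eq, not_not] at hyZ
    have h1 := hyZ hy
    have h2 := cF' v y hL
    have h3 := cP _ y hL
    have : 0 < min (Fop a b c f v y) (-(Pop P (fun y => -(v y)) y) + K) :=
      lt_min (by linarith) (by linarith)
    linarith
  have hi0 : 0 ≤ Metric.infDist x Gᶜ := Metric.infDist_nonneg
  have au : |u x - g x| ≤ N0 * Metric.infDist x Gᶜ := abs_le.2 ⟨by linarith, u1⟩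
  have av : |v x - g x| ≤ N0 * Metric.infDist x Gᶜ := abs_le.2 ⟨by linarith, v1⟩
  have hNR : N0 * Metric.infDist x Gᶜ ≤ N0 * R := by
    have := hR x hx
    gcongr
  have hgx := abs_le.1 (hg.2.1 x)
  constructor
  · have : 0 ≤ 2 * (N0 * R + K0) * Metric.infDist x Gᶜ := by positivity
    nlinarith
  · have hu' : |u x| ≤ N0 * R + K0 := abs_le.2 ⟨by linarith [hgx.1], by linarith [hgx.2]⟩
    have hv' : |v x| ≤ N0 * R + K0 := abs_le.2 ⟨by linarith [hgx.1], by linarith [hgx.2]⟩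
    linarith
end
end

section
/- The function w = lim_{K→∞} u_K is a viscosity solution of F[w] = 0 in G with w = g on ∂G: for every smooth φ and every x_0 ∈ G at which φ − w attains a local maximum equal to zero one has F[φ](x_0) ≤ 0, and for every smooth φ and every x_0 ∈ G at which φ − w attains a local minimum equal to zero one has F[φ](x_0) ≥ 0. -/
noncomputable section

open MeasureTheory Set Filter Topology
open scoped ENNReal NNReal

lemma aux_null {d : ℕ} (T : E d → E d) (G N : Set (E d)) (hN : volume N = 0)
    (hT : ∀ x ∈ G, ∃ s ∈ 𝓝 x, ∃ C : NNReal, LipschitzOnWith C T s) :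
    volume (T '' (N ∩ G)) = 0 := by
  choose! s hs C hC using hT
  obtain ⟨t, htG, htc, hcov⟩ := TopologicalSpace.countable_cover_nhdsWithin
    (f := s) (s := N ∩ G) (fun x hx => mem_nhdsWithin_of_mem_nhds (hs x hx.2))
  have hsub : T '' (N ∩ G) ⊆ ⋃ x ∈ t, T '' (N ∩ s x) := by
    rintro _ ⟨x, hx, rfl⟩
    obtain ⟨y, hy, hxy⟩ := mem_iUnion₂.1 (hcov hx)
    exact mem_iUnion₂.2 ⟨y, hy, x, ⟨hx.1, hxy⟩, rfl⟩
  refine measure_mono_null hsub ((measure_biUnion_null_iff htc).2 fun y hy => ?_)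
  have hL : LipschitzOnWith (C y) T (N ∩ s y) := (hC y (htG hy).2).mono inter_subset_right
  have : (Measure.hausdorffMeasure (d : ℝ) : Measure (E d)).IsAddHaarMeasure := by
    simpa using MeasureTheory.isAddHaarMeasure_hausdorffMeasure (E := EuclideanSpace ℝ (Fin d))
  have h1 : (Measure.hausdorffMeasure (d : ℝ) : Measure (E d)) (N ∩ s y) = 0 :=
    (Measure.absolutelyContinuous_isAddHaarMeasure (Measure.hausdorffMeasure (d : ℝ)) volume)
      (measure_mono_null inter_subset_left hN)
  have h2 := hL.hausdorffMeasure_image_le (d := (d : ℝ)) (by positivity)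
  rw [h1, mul_zero] at h2
  exact (Measure.absolutelyContinuous_isAddHaarMeasure volume (Measure.hausdorffMeasure (d : ℝ)))
    (le_antisymm h2 (by simp))

lemma aux_nondiff {d : ℕ} {F : Type*} [NormedAddCommGroup F] [NormedSpace ℝ F]
    [FiniteDimensional ℝ F] (T : E d → F) (G : Set (E d))
    (hT : ∀ x ∈ G, ∃ r : ℝ, 0 < r ∧ Metric.ball x r ⊆ G ∧
      ∃ C : NNReal, LipschitzOnWith C T (Metric.ball x r)) :
    volume {x ∈ G | ¬ DifferentiableAt ℝ T x} = 0 := by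
  choose! r hr hrG C hC using hT
  obtain ⟨t, htG, htc, hcov⟩ := TopologicalSpace.countable_cover_nhdsWithin
    (f := fun x => Metric.ball x (r x)) (s := G)
    (fun x hx => mem_nhdsWithin_of_mem_nhds (Metric.ball_mem_nhds x (hr x hx)))
  have hsub : {x ∈ G | ¬ DifferentiableAt ℝ T x} ⊆
      ⋃ x ∈ t, {y | ¬ (y ∈ Metric.ball x (r x) →
        DifferentiableWithinAt ℝ T (Metric.ball x (r x)) y)} := by
    rintro x ⟨hx, hnd⟩
    obtain ⟨y, hy, hxy⟩ := mem_iUnion₂.1 (hcov hx)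
    refine mem_iUnion₂.2 ⟨y, hy, fun h => hnd ?_⟩
    exact (h hxy).differentiableAt (Metric.isOpen_ball.mem_nhds hxy)
  refine measure_mono_null hsub ((measure_biUnion_null_iff htc).2 fun y hy => ?_)
  exact (hC y (htG hy)).ae_differentiableWithinAt_of_mem (μ := volume)

lemma aux_second {d : ℕ} (k : E d → ℝ) (x : E d) (hk : ∀ᶠ y in 𝓝 x, DifferentiableAt ℝ k y)
    (hk2 : DifferentiableAt ℝ (fderiv ℝ k) x) (hmax : IsLocalMax k x) (ξ : E d) :
    fderiv ℝ (fderiv ℝ k) x ξ ξ ≤ 0 := by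
  by_contra! hpos
  let l : ℝ → E d := fun t => x + t • ξ
  have hl : ∀ t, HasDerivAt l ξ t := fun t => by
    have h := ((hasDerivAt_id t).smul_const ξ).const_add x
    rw [one_smul] at h
    exact h
  have hl0 : l 0 = x := by simp [l]
  have hlc : Tendsto l (𝓝 0) (𝓝 x) := by
    have := (hl 0).continuousAt.tendsto
    rwa [hl0] at this
  have h1 : ∀ᶠ t in 𝓝 (0:ℝ), deriv (k ∘ l) t = fderiv ℝ k (l t) ξ := by
    filter_upwards [hlc.eventually hk] with t ht
    exact (ht.hasFDerivAt.comp_hasDerivAt t (hl t)).deriv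
  have h2 : deriv (deriv (k ∘ l)) 0 = fderiv ℝ (fderiv ℝ k) x ξ ξ := by
    rw [Filter.EventuallyEq.deriv_eq h1]
    have h3 : HasDerivAt (fun t => fderiv ℝ k (l t)) (fderiv ℝ (fderiv ℝ k) x ξ) 0 := by
      have h4 : HasFDerivAt (fderiv ℝ k) (fderiv ℝ (fderiv ℝ k) x) (l 0) := by
        rw [hl0]; exact hk2.hasFDerivAt
      exact h4.comp_hasDerivAt 0 (hl 0)
    simpa using (h3.clm_apply (hasDerivAt_const (0:ℝ) ξ)).deriv
  have hd0 : deriv (k ∘ l) 0 = 0 := by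
    rw [h1.self_of_nhds, hl0, hmax.fderiv_eq_zero]; simp
  have hmaxl : IsLocalMax (k ∘ l) 0 := by
    have : ∀ᶠ t in 𝓝 (0:ℝ), k (l t) ≤ k x := hlc.eventually hmax
    simpa [IsLocalMax, IsMaxFilter, hl0] using this
  have hcont : ContinuousAt (k ∘ l) 0 := by
    have : ContinuousAt k (l 0) := by rw [hl0]; exact hk.self_of_nhds.continuousAt
    exact this.comp (hl 0).continuousAt
  have hminl := isLocalMin_of_deriv_deriv_pos (f := k ∘ l) (by rw [h2]; exact hpos) hd0 hcont
  have heq : (k ∘ l) =ᶠ[𝓝 0] fun _ => (k ∘ l) 0 := by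
    filter_upwards [hmaxl, hminl] with t h1 h2
    exact le_antisymm h1 h2
  have h5 : deriv (deriv (k ∘ l)) 0 = 0 := by
    have h6 : deriv (k ∘ l) =ᶠ[𝓝 0] fun _ => 0 := by
      have := heq.deriv
      simpa using this
    rw [h6.deriv_eq]; simp
  rw [← h2, h5] at hpos
  exact lt_irrefl _ hpos

open scoped Matrix MatrixOrder ComplexOrder in
lemma aux_trace {d : ℕ} (m n : Fin d → Fin d → ℝ) (hm : ∀ i j, m i j = m j i)
    (hpos : ∀ ξ : Fin d → ℝ, 0 ≤ ∑ i, ∑ j, m i j * ξ i * ξ j)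
    (hn : ∀ ξ : Fin d → ℝ, (∑ i, ∑ j, n i j * ξ i * ξ j) ≤ 0) :
    (∑ i, ∑ j, m i j * n i j) ≤ 0 := by
  have hps : (Matrix.of m).PosSemidef := by
    rw [Matrix.posSemidef_iff_dotProduct_mulVec]
    refine ⟨by ext i j; simpa using hm j i, fun ξ => ?_⟩
    refine (hpos ξ).trans_eq ?_
    simp only [dotProduct, Matrix.mulVec, Finset.mul_sum]
    refine Finset.sum_congr rfl fun i _ => Finset.sum_congr rfl fun j _ => ?_
    simp only [Pi.star_apply, star_trivial, Matrix.of_apply]; ring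
  obtain ⟨B, hB⟩ := CStarAlgebra.nonneg_iff_eq_star_mul_self.mp hps.nonneg
  have hmB : ∀ i j, m i j = ∑ k, B k i * B k j := fun i j => by
    have := congrFun (congrFun hB i) j
    simpa [Matrix.mul_apply, Matrix.star_apply] using this
  calc (∑ i, ∑ j, m i j * n i j) = ∑ k, ∑ i, ∑ j, n i j * B k i * B k j := by
        conv_rhs => rw [Finset.sum_comm]
        refine Finset.sum_congr rfl fun i _ => ?_
        conv_rhs => rw [Finset.sum_comm]
        refine Finset.sum_congr rfl fun j _ => ?_
        rw [hmB, Finset.sum_mul]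
        exact Finset.sum_congr rfl fun k _ => by ring
    _ ≤ 0 := Finset.sum_nonpos fun k _ => hn (B k)

lemma aux_touch {d : ℕ} (G : Set (E d)) (hG : IsOpen G) (w φ : E d → ℝ)
    (hw : ContinuousOn w G) (hφ : ContDiff ℝ 2 φ) (x0 : E d) (hx0 : x0 ∈ G)
    (hmax : IsLocalMax (fun x => φ x - w x) x0) (h0 : φ x0 - w x0 = 0)
    (ε : ℝ) (hε : 0 < ε) (r0 : ℝ) (hr0 : 0 < r0) :
    ∃ κ : ℝ, 0 < κ ∧ ∀ u : E d → ℝ, DifferentiableOn ℝ u G →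
      (∀ x ∈ G, ∃ r : ℝ, 0 < r ∧ Metric.ball x r ⊆ G ∧
        ∃ C : NNReal, LipschitzOnWith C (fderiv ℝ u) (Metric.ball x r)) →
      (∀ x ∈ G, |u x - w x| ≤ κ) → ∀ N : Set (E d), volume N = 0 →
      ∃ x ∈ G, x ∈ Metric.ball x0 r0 ∧ x ∉ N ∧ DifferentiableAt ℝ (fderiv ℝ u) x ∧
        ‖fderiv ℝ φ x - fderiv ℝ u x‖ ≤ ε ∧ |φ x - u x| ≤ ε ∧
        ∀ ξ : E d, fderiv ℝ (fderiv ℝ φ) x ξ ξ - fderiv ℝ (fderiv ℝ u) x ξ ξ ≤ ε * ‖ξ‖ ^ 2 := by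
  have hcont : ContinuousAt (fun x => φ x - w x) x0 :=
    hφ.continuous.continuousAt.sub (hw.continuousAt (hG.mem_nhds hx0))
  have hev : ∀ᶠ x in 𝓝 x0, x ∈ G ∧ φ x - w x ≤ 0 ∧ |φ x - w x| ≤ ε / 2 := by
    have h1 : ∀ᶠ x in 𝓝 x0, |φ x - w x| < ε / 2 := by
      have := hcont.abs
      refine this.eventually (gt_mem_nhds ?_)
      simpa [h0] using hε
    filter_upwards [hG.mem_nhds hx0, hmax, h1] with x hx hx1 hx2
    exact ⟨hx, by simpa [h0] using hx1, hx2.le⟩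
  obtain ⟨r1, hr1, hball⟩ := Metric.nhds_basis_closedBall.eventually_iff.1 hev
  obtain ⟨r, hr, hrr1, hrr0, hr1'⟩ : ∃ r : ℝ, 0 < r ∧ r ≤ r1 ∧ r ≤ r0 ∧ r ≤ 1 :=
    ⟨min r1 (min r0 1), by positivity, min_le_left _ _,
      (min_le_right _ _).trans (min_le_left _ _), (min_le_right _ _).trans (min_le_right _ _)⟩
  have hB : ∀ x ∈ Metric.closedBall x0 r, x ∈ G ∧ φ x - w x ≤ 0 ∧ |φ x - w x| ≤ ε / 2 :=
    fun x hx => hball (Metric.closedBall_subset_closedBall hrr1 hx)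
  clear hball hev
  set e : ℝ := ε / 4 with he
  have hepos : 0 < e := by positivity
  refine ⟨min (ε / 2) (e * r ^ 2 / 3), by positivity, fun u hu huC huw N hN => ?_⟩
  have hκ1 : ∀ x ∈ G, |u x - w x| ≤ ε / 2 := fun x hx => (huw x hx).trans (min_le_left _ _)
  have hκ2 : ∀ x ∈ G, |u x - w x| ≤ e * r ^ 2 / 3 := fun x hx => (huw x hx).trans (min_le_right _ _)
  have hφd : Differentiable ℝ φ := hφ.differentiable (by norm_num)
  have hφ1 : ContDiff ℝ 1 (fderiv ℝ φ) := hφ.fderiv_right (by norm_num)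
  have hud : ∀ x ∈ G, DifferentiableAt ℝ u x := fun x hx => hu.differentiableAt (hG.mem_nhds hx)
  let J := (InnerProductSpace.toDual ℝ (E d))
  let T : E d → E d := fun x => J.symm (fderiv ℝ φ x - fderiv ℝ u x) - (2 * e) • (x - x0)
  have hT : ∀ x ∈ G, ∃ s ∈ 𝓝 x, ∃ C : NNReal, LipschitzOnWith C T s := by
    intro x hx
    obtain ⟨s, hs, -, C, hC⟩ := huC x hx
    obtain ⟨C', t, ht, hC'⟩ := hφ1.contDiffAt.exists_lipschitzOnWith (x := x)
    refine ⟨t ∩ Metric.ball x s, inter_mem ht (Metric.ball_mem_nhds x hs), ?_⟩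
    have h1 := (hC'.mono (inter_subset_left (t := Metric.ball x s))).sub
      (hC.mono (inter_subset_right (s := t)))
    have h2 := J.symm.lipschitz.comp_lipschitzOnWith h1
    have h3 : LipschitzWith _ (fun y : E d => (2 * e) • (y - x0)) :=
      (lipschitzWith_smul (2 * e)).comp (LipschitzWith.id.sub (LipschitzWith.const x0))
    exact ⟨_, h2.sub (h3.lipschitzOnWith)⟩
  have hnd := aux_nondiff (fderiv ℝ u) G huC
  have hbad : volume (N ∪ {x ∈ G | ¬ DifferentiableAt ℝ (fderiv ℝ u) x}) = 0 :=
    measure_union_null hN hnd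
  have him := aux_null T G _ hbad hT
  set ρ : ℝ := min (ε / 2) (e * r / 3) with hρ
  have hρpos : 0 < ρ := by positivity
  obtain ⟨p, hp, hpn⟩ : ∃ p ∈ Metric.ball (0 : E d) ρ,
      p ∉ T '' ((N ∪ {x ∈ G | ¬ DifferentiableAt ℝ (fderiv ℝ u) x}) ∩ G) := by
    by_contra! hcon
    have h1 : volume (Metric.ball (0 : E d) ρ) = 0 := measure_mono_null hcon him
    exact (Metric.measure_ball_pos volume (0 : E d) hρpos).ne' h1
  have hpn1 : ‖p‖ < ε / 2 := (mem_ball_zero_iff.1 hp).trans_le (min_le_left _ _)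
  have hpn2 : ‖p‖ < e * r / 3 := (mem_ball_zero_iff.1 hp).trans_le (min_le_right _ _)
  let k : E d → ℝ := fun x => φ x - u x - e * ‖x - x0‖ ^ 2 - inner ℝ p (x - x0)
  have hkd : ∀ x ∈ G, HasFDerivAt k (fderiv ℝ φ x - fderiv ℝ u x - (2 * e) • innerSL ℝ (x - x0)
      - innerSL ℝ p) x := by
    intro x hx
    have h1 : HasFDerivAt (fun y : E d => ‖y - x0‖ ^ 2) (2 • innerSL ℝ (x - x0)) x := by
      have := (hasStrictFDerivAt_norm_sq (x - x0)).hasFDerivAt.comp x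
        ((hasFDerivAt_id x).sub_const x0)
      exact this
    have h2 : HasFDerivAt (fun y : E d => inner ℝ p (y - x0)) (innerSL ℝ p) x := by
      have := (innerSL ℝ p).hasFDerivAt.comp x ((hasFDerivAt_id x).sub_const x0)
      exact this
    have h3 := (((hφd x).hasFDerivAt.sub (hud x hx).hasFDerivAt).sub (h1.const_mul e)).sub h2
    have h4 : (2 * e) • innerSL ℝ (x - x0) = e • 2 • innerSL ℝ (x - x0) := by
      rw [mul_comm, mul_smul, ofNat_smul_eq_nsmul]
    rw [h4]
    exact h3
  have hkc : ContinuousOn k (Metric.closedBall x0 r) := fun x hx =>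
    (hkd x (hB x hx).1).continuousAt.continuousWithinAt
  obtain ⟨x, hx, hxmax⟩ := (isCompact_closedBall x0 r).exists_isMaxOn
    ⟨x0, Metric.mem_closedBall_self hr.le⟩ hkc
  have hxG := (hB x hx).1
  have hxr : ‖x - x0‖ < r := by
    have hle : ‖x - x0‖ ≤ r := by simpa [dist_eq_norm] using hx
    refine lt_of_le_of_ne hle fun heq => ?_
    have h1 : k x0 ≤ k x := hxmax (Metric.mem_closedBall_self hr.le)
    have h2 : k x0 = φ x0 - u x0 := by simp [k]
    have h3 : k x = φ x - u x - e * r ^ 2 - inner ℝ p (x - x0) := by simp only [k, heq]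
    have h4 := abs_le.1 (hκ2 x0 hx0)
    have h5 := abs_le.1 (hκ2 x hxG)
    have h6 := (hB x hx).2.1
    have h7 : -(‖p‖ * r) ≤ inner ℝ p (x - x0) := by
      have := (abs_le.1 (abs_real_inner_le_norm p (x - x0))).1
      rwa [heq] at this
    have h8 : ‖p‖ * r < e * r / 3 * r := mul_lt_mul_of_pos_right hpn2 hr
    nlinarith
  have hxb : x ∈ Metric.ball x0 r := by simpa [dist_eq_norm] using hxr
  have hloc : IsLocalMax k x := hxmax.isLocalMax
    (Filter.mem_of_superset (Metric.isOpen_ball.mem_nhds hxb) Metric.ball_subset_closedBall)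
  have hzero := hloc.hasFDerivAt_eq_zero (hkd x hxG)
  have hgrad : fderiv ℝ φ x - fderiv ℝ u x = (2 * e) • innerSL ℝ (x - x0) + innerSL ℝ p := by
    rw [sub_sub, sub_eq_zero] at hzero; exact hzero
  have hTp : T x = p := by
    have h1 : J.symm (fderiv ℝ φ x - fderiv ℝ u x) = (2 * e) • (x - x0) + p := by
      rw [hgrad, LinearIsometryEquiv.symm_apply_eq]
      ext y; simp [J]
    simp only [T]; rw [h1]; simp
  have hxbad : x ∉ N ∪ {x ∈ G | ¬ DifferentiableAt ℝ (fderiv ℝ u) x} :=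
    fun hxb => hpn ⟨x, ⟨hxb, hxG⟩, hTp⟩
  have hxN : x ∉ N := fun h => hxbad (Or.inl h)
  have hxD : DifferentiableAt ℝ (fderiv ℝ u) x := by
    by_contra h; exact hxbad (Or.inr ⟨hxG, h⟩)
  refine ⟨x, hxG, Metric.ball_subset_ball hrr0 hxb, hxN, hxD, ?_, ?_, fun ξ => ?_⟩
  · rw [hgrad]
    refine (norm_add_le _ _).trans ?_
    rw [norm_smul, innerSL_apply_norm, innerSL_apply_norm, Real.norm_of_nonneg (by positivity)]
    nlinarith
  · have h1 := abs_le.1 (hκ1 x hxG)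
    have h2 := abs_le.1 (hB x hx).2.2
    rw [abs_le]; constructor <;> linarith
  · have hφ2 : DifferentiableAt ℝ (fderiv ℝ φ) x := hφ1.differentiable (by norm_num) x
    have hkf : fderiv ℝ k =ᶠ[𝓝 x] fun x => fderiv ℝ φ x - fderiv ℝ u x
        - (2 * e) • innerSL ℝ (x - x0) - innerSL ℝ p := by
      filter_upwards [hG.mem_nhds hxG] with y hy using (hkd y hy).fderiv
    have h1 : HasFDerivAt (fun y : E d => (2 * e) • innerSL ℝ (y - x0))
        ((2 * e) • innerSL ℝ (E := E d)) x := by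
      have := ((innerSL ℝ (E := E d)).hasFDerivAt.comp x ((hasFDerivAt_id x).sub_const x0)).const_smul (2 * e)
      exact this
    have h2 := ((hφ2.hasFDerivAt.sub hxD.hasFDerivAt).sub h1).sub_const (innerSL ℝ p)
    have h3 := h2.congr_of_eventuallyEq hkf
    have h4 := aux_second k x (by
      filter_upwards [hG.mem_nhds hxG] with y hy using (hkd y hy).differentiableAt)
      h3.differentiableAt hloc ξ
    rw [h3.fderiv] at h4
    simp only [sub_apply, smul_apply] at h4
    have h5 : (innerSL ℝ ξ) ξ = ‖ξ‖ ^ 2 := by simp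
    rw [h5] at h4
    have : 0 ≤ ‖ξ‖ ^ 2 := by positivity
    simp only [smul_eq_mul] at h4
    nlinarith

lemma aux_D2 {d : ℕ} (u : E d → ℝ) (x : E d) (h : DifferentiableAt ℝ (fderiv ℝ u) x)
    (i j : Fin d) : D2 u x i j =
      fderiv ℝ (fderiv ℝ u) x (EuclideanSpace.single i 1) (EuclideanSpace.single j 1) := by
  unfold D2
  have h1 := h.hasFDerivAt.clm_apply
    (hasFDerivAt_const (EuclideanSpace.single j (1:ℝ) : E d) x)
  rw [h1.fderiv]
  simp

lemma aux_quad {d : ℕ} (M : E d →L[ℝ] E d →L[ℝ] ℝ) (ξ : Fin d → ℝ) :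
    ∑ i, ∑ j, M (EuclideanSpace.single i 1) (EuclideanSpace.single j 1) * ξ i * ξ j
      = M (WithLp.toLp 2 ξ) (WithLp.toLp 2 ξ) := by
  have h : (WithLp.toLp 2 ξ : E d) = ∑ i, ξ i • (EuclideanSpace.single i (1:ℝ) : E d) := by
    ext k
    simp [Finset.sum_apply, Pi.single_apply]
  rw [h]
  simp only [map_sum, map_smul, sum_apply, smul_apply, smul_eq_mul]
  rw [Finset.sum_comm]
  refine Finset.sum_congr rfl fun i _ => ?_
  rw [Finset.mul_sum]
  refine Finset.sum_congr rfl fun j _ => ?_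
  ring

lemma aux_touch' {d : ℕ} (G : Set (E d)) (hG : IsOpen G) (w φ : E d → ℝ)
    (hw : ContinuousOn w G) (hφ : ContDiff ℝ 2 φ) (x0 : E d) (hx0 : x0 ∈ G)
    (hmax : IsLocalMax (fun x => φ x - w x) x0) (h0 : φ x0 - w x0 = 0)
    (ε : ℝ) (hε : 0 < ε) (r0 : ℝ) (hr0 : 0 < r0) :
    ∃ κ : ℝ, 0 < κ ∧ ∀ u : E d → ℝ, DifferentiableOn ℝ u G →
      (∀ x ∈ G, ∃ r : ℝ, 0 < r ∧ Metric.ball x r ⊆ G ∧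
        ∃ C : NNReal, LipschitzOnWith C (fderiv ℝ u) (Metric.ball x r)) →
      (∀ x ∈ G, |u x - w x| ≤ κ) → ∀ N : Set (E d), volume N = 0 →
      ∃ x ∈ G, x ∈ Metric.ball x0 r0 ∧ x ∉ N ∧
        (∀ i, |D1 φ x i - D1 u x i| ≤ ε) ∧ |φ x - u x| ≤ ε ∧
        ∀ ξ : Fin d → ℝ, ∑ i, ∑ j, (D2 φ x i j - D2 u x i j) * ξ i * ξ j ≤ ε * ∑ i, ξ i ^ 2 := by
  obtain ⟨κ, hκ, H⟩ := aux_touch G hG w φ hw hφ x0 hx0 hmax h0 ε hε r0 hr0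
  refine ⟨κ, hκ, fun u hu huC huw N hN => ?_⟩
  obtain ⟨x, hxG, hxb, hxN, hxD, h1, h2, h3⟩ := H u hu huC huw N hN
  refine ⟨x, hxG, hxb, hxN, fun i => ?_, h2, fun ξ => ?_⟩
  · have := (fderiv ℝ φ x - fderiv ℝ u x).le_opNorm (EuclideanSpace.single i 1)
    rw [EuclideanSpace.norm_single, norm_one, mul_one] at this
    exact this.trans h1
  · have hφ1 : ContDiff ℝ 1 (fderiv ℝ φ) := hφ.fderiv_right (by norm_num)
    have hφ2 : DifferentiableAt ℝ (fderiv ℝ φ) x := hφ1.differentiable (by norm_num) x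
    have h4 := h3 (WithLp.toLp 2 ξ)
    rw [EuclideanSpace.real_norm_sq_eq] at h4
    refine le_trans (le_of_eq ?_) h4
    rw [← aux_quad, ← aux_quad]
    simp only [aux_D2 u x hxD, aux_D2 φ x hφ2, sub_mul, Finset.sum_sub_distrib]

lemma aux_vec {d : ℕ} (v : Fin d → ℝ) (i : Fin d) : |v i| ≤ vecNorm v := by
  unfold vecNorm
  rw [← Real.sqrt_sq_eq_abs]
  exact Real.sqrt_le_sqrt (Finset.single_le_sum (f := fun i => v i ^ 2)
    (fun i _ => sq_nonneg _) (Finset.mem_univ i))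

lemma aux_mat {d : ℕ} (m : Fin d → Fin d → ℝ) (i j : Fin d) : |m i j| ≤ matNorm m := by
  unfold matNorm
  rw [← Real.sqrt_sq_eq_abs]
  refine Real.sqrt_le_sqrt ?_
  refine (Finset.single_le_sum (f := fun j => m i j ^ 2)
    (fun i _ => sq_nonneg _) (Finset.mem_univ j)).trans ?_
  exact Finset.single_le_sum (f := fun i => ∑ j, m i j ^ 2)
    (fun i _ => Finset.sum_nonneg fun _ _ => sq_nonneg _) (Finset.mem_univ i)

lemma aux_tr2 {d : ℕ} (m n : Fin d → Fin d → ℝ) (ε : ℝ) (hm : ∀ i j, m i j = m j i)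
    (hpos : ∀ ξ : Fin d → ℝ, 0 ≤ ∑ i, ∑ j, m i j * ξ i * ξ j)
    (hn : ∀ ξ : Fin d → ℝ, (∑ i, ∑ j, n i j * ξ i * ξ j) ≤ ε * ∑ i, ξ i ^ 2) :
    (∑ i, ∑ j, m i j * n i j) ≤ ε * ∑ i, m i i := by
  have h := aux_trace m (fun i j => n i j - if i = j then ε else 0) hm hpos (fun ξ => by
    have := hn ξ
    simp only [sub_mul, Finset.sum_sub_distrib, ite_mul, zero_mul, Finset.sum_ite_eq,
      Finset.mem_univ, if_true]
    rw [Finset.mul_sum] at this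
    rw [sub_nonpos]
    refine this.trans (le_of_eq (Finset.sum_congr rfl fun i _ => by ring)))
  simp only [mul_sub, Finset.sum_sub_distrib, mul_ite, mul_zero, Finset.sum_ite_eq,
      Finset.mem_univ, if_true, sub_nonpos] at h
  rw [Finset.mul_sum]
  refine h.trans (le_of_eq (Finset.sum_congr rfl fun i _ => by ring))

lemma aux_jet {d : ℕ} {A B : Type} (a : A → B → E d → Fin d → Fin d → ℝ)
    (b : A → B → E d → Fin d → ℝ) (c : A → B → E d → ℝ) (δ K0 ε : ℝ) (hδ : 0 < δ)
    (hε : 0 < ε) (ha : ∀ α β x, memSdelta δ (a α β x))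
    (haK : ∀ α β x, matNorm (a α β x) ≤ K0) (hb : ∀ α β x, vecNorm (b α β x) ≤ K0)
    (hc : ∀ α β x, 0 ≤ c α β x ∧ c α β x ≤ K0) (u v : E d → ℝ) (x : E d)
    (h1 : ∀ i, |D1 u x i - D1 v x i| ≤ ε) (h2 : |u x - v x| ≤ ε)
    (h3 : ∀ ξ : Fin d → ℝ, ∑ i, ∑ j, (D2 u x i j - D2 v x i j) * ξ i * ξ j ≤ ε * ∑ i, ξ i ^ 2)
    (α : A) (β : B) : Lop a b c α β u x ≤ Lop a b c α β v x + (2 * d + 1) * K0 * ε := by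
  have e1 : (∑ i, ∑ j, a α β x i j * D2 u x i j) - (∑ i, ∑ j, a α β x i j * D2 v x i j)
      ≤ d * K0 * ε := by
    have h := aux_tr2 (a α β x) (fun i j => D2 u x i j - D2 v x i j) ε (ha α β x).1
      (fun ξ => le_trans (by positivity) ((ha α β x).2 ξ).1) h3
    simp only [mul_sub, Finset.sum_sub_distrib] at h
    refine h.trans ?_
    have : ∑ i, a α β x i i ≤ ∑ i : Fin d, K0 := Finset.sum_le_sum fun i _ =>
      (le_abs_self _).trans ((aux_mat _ i i).trans (haK α β x))
    simp at this
    nlinarith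
  have e2 : (∑ i, b α β x i * D1 u x i) - (∑ i, b α β x i * D1 v x i) ≤ d * K0 * ε := by
    rw [← Finset.sum_sub_distrib]
    have : ∑ i, (b α β x i * D1 u x i - b α β x i * D1 v x i) ≤ ∑ i : Fin d, K0 * ε := by
      refine Finset.sum_le_sum fun i _ => ?_
      rw [← mul_sub]
      refine (le_abs_self _).trans ?_
      rw [abs_mul]
      have hbi := (aux_vec _ i).trans (hb α β x)
      exact mul_le_mul hbi (h1 i) (abs_nonneg _) ((abs_nonneg _).trans hbi)
    rw [Finset.sum_const, Finset.card_univ, Fintype.card_fin, nsmul_eq_mul] at this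
    linarith
  have e3 : -(c α β x * u x) + c α β x * v x ≤ K0 * ε := by
    have := abs_le.1 h2
    have := hc α β x
    nlinarith
  unfold Lop
  linarith

lemma aux_supinf {A B : Type} [Nonempty A] [Nonempty B] (H H' : A → B → ℝ) (M M' η : ℝ)
    (hM : ∀ α β, |H α β| ≤ M) (hM' : ∀ α β, |H' α β| ≤ M')
    (h : ∀ α β, H α β ≤ H' α β + η) : (⨆ α, ⨅ β, H α β) ≤ (⨆ α, ⨅ β, H' α β) + η := by
  obtain ⟨β0⟩ := ‹Nonempty B›
  have hbd : ∀ α, BddBelow (range (H α)) := fun α =>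
    ⟨-M, by rintro _ ⟨β, rfl⟩; exact (abs_le.1 (hM α β)).1⟩
  have hbd' : ∀ α, BddBelow (range (H' α)) := fun α =>
    ⟨-M', by rintro _ ⟨β, rfl⟩; exact (abs_le.1 (hM' α β)).1⟩
  have hsup : BddAbove (range fun α => ⨅ β, H' α β) :=
    ⟨M', by rintro _ ⟨α, rfl⟩; exact (ciInf_le (hbd' α) β0).trans (abs_le.1 (hM' α β0)).2⟩
  refine ciSup_le fun α => ?_
  have h1 : (⨅ β, H α β) - η ≤ ⨅ β, H' α β :=
    le_ciInf fun β => by linarith [ciInf_le (hbd α) β, h α β]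
  linarith [le_ciSup hsup α]

lemma aux_bdd {d : ℕ} {A B : Type} (a : A → B → E d → Fin d → Fin d → ℝ)
    (b : A → B → E d → Fin d → ℝ) (c f : A → B → E d → ℝ) (K0 : ℝ)
    (haK : ∀ α β x, matNorm (a α β x) ≤ K0) (hb : ∀ α β x, vecNorm (b α β x) ≤ K0)
    (hc : ∀ α β x, 0 ≤ c α β x ∧ c α β x ≤ K0) (hf : ∀ α β x, |f α β x| ≤ K0)
    (u : E d → ℝ) (x : E d) : ∃ M, ∀ α β, |Lop a b c α β u x + f α β x| ≤ M := by
  refine ⟨(∑ i, ∑ j, K0 * |D2 u x i j|) + (∑ i, K0 * |D1 u x i|) + K0 * |u x| + K0, fun α β => ?_⟩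
  unfold Lop
  refine (abs_add_le _ _).trans (add_le_add ?_ (hf α β x))
  refine (abs_sub _ _).trans (add_le_add ((abs_add_le _ _).trans (add_le_add ?_ ?_)) ?_)
  · refine (Finset.abs_sum_le_sum_abs _ _).trans (Finset.sum_le_sum fun i _ =>
      (Finset.abs_sum_le_sum_abs _ _).trans (Finset.sum_le_sum fun j _ => ?_))
    rw [abs_mul]
    exact mul_le_mul_of_nonneg_right ((aux_mat _ i j).trans (haK α β x)) (abs_nonneg _)
  · refine (Finset.abs_sum_le_sum_abs _ _).trans (Finset.sum_le_sum fun i _ => ?_)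
    rw [abs_mul]
    exact mul_le_mul_of_nonneg_right ((aux_vec _ i).trans (hb α β x)) (abs_nonneg _)
  · rw [abs_mul, abs_of_nonneg (hc α β x).1]
    exact mul_le_mul_of_nonneg_right (hc α β x).2 (abs_nonneg _)

lemma aux_prod (s t s' t' K τ : ℝ) (hs : |s'| ≤ K) (hss : |s - s'| ≤ τ) :
    |s * t - s' * t'| ≤ τ * |t| + K * |t - t'| := by
  have : s * t - s' * t' = (s - s') * t + s' * (t - t') := by ring
  rw [this]
  refine (abs_add_le _ _).trans ?_
  rw [abs_mul, abs_mul]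
  gcongr

lemma aux_cD1 {d : ℕ} (φ : E d → ℝ) (hφ : ContDiff ℝ 2 φ) (i : Fin d) :
    Continuous (fun x => D1 φ x i) :=
  (hφ.continuous_fderiv (by norm_num)).clm_apply continuous_const

lemma aux_cD2 {d : ℕ} (φ : E d → ℝ) (hφ : ContDiff ℝ 2 φ) (i j : Fin d) :
    Continuous (fun x => D2 φ x i j) := by
  have hφ1 : ContDiff ℝ 1 (fderiv ℝ φ) := hφ.fderiv_right (by norm_num)
  have hφ2 : Differentiable ℝ (fderiv ℝ φ) := hφ1.differentiable (by norm_num)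
  have : (fun x => D2 φ x i j) = fun x =>
      fderiv ℝ (fderiv ℝ φ) x (EuclideanSpace.single i 1) (EuclideanSpace.single j 1) :=
    funext fun x => aux_D2 φ x (hφ2 x) i j
  rw [this]
  exact ((hφ1.continuous_fderiv (by norm_num)).clm_apply continuous_const).clm_apply
    continuous_const

lemma aux_cont {d : ℕ} {A B : Type} (a : A → B → E d → Fin d → Fin d → ℝ)
    (b : A → B → E d → Fin d → ℝ) (c f : A → B → E d → ℝ) (K0 γ : ℝ) (ω : ℝ → ℝ)
    (hγ : 0 < γ) (hω : Continuous ω) (hω0 : ω 0 = 0)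
    (haK : ∀ α β x, matNorm (a α β x) ≤ K0) (hb : ∀ α β x, vecNorm (b α β x) ≤ K0)
    (hc : ∀ α β x, 0 ≤ c α β x ∧ c α β x ≤ K0)
    (ha' : ∀ α β x y, matNorm (fun i j => a α β x i j - a α β y i j) ≤ K0 * ‖x - y‖ ^ γ)
    (hb' : ∀ α β x y, vecNorm (fun i => b α β x i - b α β y i) ≤ K0 * ω ‖x - y‖)
    (hc' : ∀ α β x y, |c α β x - c α β y| ≤ K0 * ω ‖x - y‖)
    (hf' : ∀ α β x y, |f α β x - f α β y| ≤ K0 * ω ‖x - y‖)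
    (φ : E d → ℝ) (hφ : ContDiff ℝ 2 φ) (x0 : E d) (η : ℝ) (hη : 0 < η) :
    ∀ᶠ x in 𝓝 x0, ∀ α β, |(Lop a b c α β φ x + f α β x) - (Lop a b c α β φ x0 + f α β x0)| ≤ η := by
  let ρ : E d → ℝ := fun x =>
    (∑ i, ∑ j, (K0 * ‖x - x0‖ ^ γ * |D2 φ x i j| + K0 * |D2 φ x i j - D2 φ x0 i j|))
    + (∑ i, (K0 * ω ‖x - x0‖ * |D1 φ x i| + K0 * |D1 φ x i - D1 φ x0 i|))
    + (K0 * ω ‖x - x0‖ * |φ x| + K0 * |φ x - φ x0|) + K0 * ω ‖x - x0‖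
  have hρ0 : ρ x0 = 0 := by simp [ρ, hω0, Real.zero_rpow hγ.ne']
  have hρc : Continuous ρ := by
    have h1 : Continuous fun x : E d => ‖x - x0‖ ^ γ :=
      Continuous.rpow_const (by fun_prop) (fun _ => Or.inr hγ.le)
    have h2 : Continuous fun x : E d => ω ‖x - x0‖ := hω.comp (by fun_prop)
    have h3 := aux_cD1 φ hφ
    have h4 := aux_cD2 φ hφ
    have h5 := hφ.continuous
    refine ((Continuous.add ?_ ?_).add ?_).add ?_
    · refine continuous_finset_sum _ fun i _ => continuous_finset_sum _ fun j _ => ?_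
      have := h4 i j
      fun_prop
    · refine continuous_finset_sum _ fun i _ => ?_
      have := h3 i
      fun_prop
    · fun_prop
    · fun_prop
  have hev : ∀ᶠ x in 𝓝 x0, ρ x < η :=
    hρc.continuousAt.eventually (gt_mem_nhds (by rw [hρ0]; exact hη))
  filter_upwards [hev] with x hx α β
  refine le_trans ?_ hx.le
  unfold Lop
  have hre : ((∑ i, ∑ j, a α β x i j * D2 φ x i j) + (∑ i, b α β x i * D1 φ x i)
        - c α β x * φ x + f α β x)
      - ((∑ i, ∑ j, a α β x0 i j * D2 φ x0 i j) + (∑ i, b α β x0 i * D1 φ x0 i)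
        - c α β x0 * φ x0 + f α β x0)
      = (∑ i, ∑ j, (a α β x i j * D2 φ x i j - a α β x0 i j * D2 φ x0 i j))
        + (∑ i, (b α β x i * D1 φ x i - b α β x0 i * D1 φ x0 i))
        - (c α β x * φ x - c α β x0 * φ x0) + (f α β x - f α β x0) := by
    simp only [Finset.sum_sub_distrib]; ring
  rw [hre]
  refine (abs_add_le _ _).trans (add_le_add ?_ (hf' α β x x0))
  refine (abs_sub _ _).trans (add_le_add ((abs_add_le _ _).trans (add_le_add ?_ ?_)) ?_)
  · refine (Finset.abs_sum_le_sum_abs _ _).trans (Finset.sum_le_sum fun i _ =>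
      (Finset.abs_sum_le_sum_abs _ _).trans (Finset.sum_le_sum fun j _ => ?_))
    exact aux_prod _ _ _ _ _ _ ((aux_mat _ i j).trans (haK α β x0))
      ((aux_mat (fun i j => a α β x i j - a α β x0 i j) i j).trans (ha' α β x x0))
  · refine (Finset.abs_sum_le_sum_abs _ _).trans (Finset.sum_le_sum fun i _ => ?_)
    exact aux_prod _ _ _ _ _ _ ((aux_vec _ i).trans (hb α β x0))
      ((aux_vec (fun i => b α β x i - b α β x0 i) i).trans (hb' α β x x0))
  · exact aux_prod _ _ _ _ _ _ (by rw [abs_of_nonneg (hc α β x0).1]; exact (hc α β x0).2)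
      (hc' α β x x0)

lemma aux_Pmono {d : ℕ} (δhat K1 : ℝ) (hδ : 0 < δhat)
    (P : (Fin d → Fin d → ℝ) → (Fin d → ℝ) → ℝ → ℝ) (hP : PAssump δhat K1 P)
    (m n : Fin d → Fin d → ℝ) (v : Fin d → ℝ) (r : ℝ)
    (hn : ∀ ξ : Fin d → ℝ, 0 ≤ ∑ i, ∑ j, n i j * ξ i * ξ j) :
    P m v r ≤ P (m + n) v r := by
  obtain ⟨hconv, -, ⟨C, hC⟩, hdiff⟩ := hP
  set Q : (Fin d → Fin d → ℝ) × (Fin d → ℝ) × ℝ → ℝ := fun q => P q.1 q.2.1 q.2.2 with hQ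
  let V : (Fin d → Fin d → ℝ) × (Fin d → ℝ) × ℝ := (n, 0, 0)
  have key : ∀ p, DifferentiableAt ℝ Q p → Q p ≤ Q (p + V) := by
    intro p hp
    have hV : V = ∑ i, ∑ j, n i j •
        ((Pi.single i (Pi.single j (1:ℝ)), 0, 0) : (Fin d → Fin d → ℝ) × (Fin d → ℝ) × ℝ) := by
      refine Prod.ext ?_ (Prod.ext ?_ ?_)
      · ext k l
        simp [V, Prod.fst_sum, Finset.sum_apply, Pi.single_apply, ite_apply]
      · simp [V, Prod.fst_sum, Prod.snd_sum]
      · simp [V, Prod.snd_sum]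
    have h1 : 0 ≤ fderiv ℝ Q p V := by
      have hS := (hdiff p hp).1
      have h2 := aux_trace _ (fun i j => - n i j) hS.1
        (fun ξ => le_trans (by positivity) (hS.2 ξ).1)
        (fun ξ => by simpa using hn ξ)
      rw [hV]
      simp only [map_sum, map_smul, smul_eq_mul]
      simp only [mul_neg, Finset.sum_neg_distrib] at h2
      refine (neg_nonpos.1 h2).trans_eq ?_
      exact Finset.sum_congr rfl fun i _ => Finset.sum_congr rfl fun j _ => mul_comm _ _
    let l : ℝ → (Fin d → Fin d → ℝ) × (Fin d → ℝ) × ℝ := fun t => p + t • V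
    have hl : HasDerivAt l V 0 := by
      have h := ((hasDerivAt_id (0:ℝ)).smul_const V).const_add p
      rw [one_smul] at h
      exact h
    have hl0 : l 0 = p := by simp [l]
    have hd : HasDerivAt (fun t => Q (l t)) (fderiv ℝ Q p V) 0 := by
      have h4 : HasFDerivAt Q (fderiv ℝ Q p) (l 0) := by rw [hl0]; exact hp.hasFDerivAt
      exact h4.comp_hasDerivAt 0 hl
    have hcv : ConvexOn ℝ univ (fun t => Q (l t)) := by
      refine ⟨convex_univ, fun s _ t _ α β hα hβ hab => ?_⟩
      have := hconv.2 (mem_univ (l s)) (mem_univ (l t)) hα hβ hab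
      have he : l (α • s + β • t) = α • l s + β • l t := by
        simp only [l, smul_add, smul_smul, add_smul, smul_eq_mul]
        have : p = α • p + β • p := by rw [← add_smul, hab, one_smul]
        nth_rewrite 1 [this]
        abel
      show Q (l (α • s + β • t)) ≤ _
      rw [he]; exact this
    have h5 := hcv.le_slope_of_hasDerivAt (mem_univ 0) (mem_univ 1) zero_lt_one hd
    rw [slope_def_field] at h5
    have h6 : l 1 = p + V := by simp [l]
    simp only [hl0, h6] at h5
    linarith
  have hae := hC.ae_differentiableAt (μ := Measure.addHaar)
  have hdense : Dense {p | DifferentiableAt ℝ Q p} := Measure.dense_of_ae hae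
  have hcl : IsClosed {p | Q p ≤ Q (p + V)} :=
    isClosed_le hC.continuous (hC.continuous.comp (by fun_prop))
  have hall : {p | Q p ≤ Q (p + V)} = univ := by
    refine univ_subset_iff.1 ?_
    rw [← hdense.closure_eq]
    exact hcl.closure_subset_iff.2 key
  have := (hall.symm ▸ mem_univ (m, v, r) : (m, v, r) ∈ {p | Q p ≤ Q (p + V)})
  simpa [Q, V] using this

lemma aux_nD1 {d : ℕ} (u : E d → ℝ) (x : E d) (i : Fin d) :
    D1 (fun y => -(u y)) x i = - D1 u x i := by
  unfold D1
  rw [fderiv_fun_neg]; rfl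

lemma aux_nD2 {d : ℕ} (u : E d → ℝ) (x : E d) (i j : Fin d) :
    D2 (fun y => -(u y)) x i j = - D2 u x i j := by
  unfold D2
  have : (fun y => fderiv ℝ (fun y => -(u y)) y (EuclideanSpace.single j 1))
      = fun y => -(fderiv ℝ u y (EuclideanSpace.single j 1)) := by
    funext y
    rw [fderiv_fun_neg]; rfl
  rw [this, fderiv_fun_neg]; rfl

lemma aux_Pbd {d : ℕ} (δhat K1 : ℝ) (hδ : 0 < δhat)
    (P : (Fin d → Fin d → ℝ) → (Fin d → ℝ) → ℝ → ℝ) (hP : PAssump δhat K1 P) (C : NNReal)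
    (hC : LipschitzWith C
      (fun p : (Fin d → Fin d → ℝ) × (Fin d → ℝ) × ℝ => P p.1 p.2.1 p.2.2))
    (u v : E d → ℝ) (x : E d) (ε : ℝ) (hε : 0 < ε)
    (h1 : ∀ i, |D1 u x i - D1 v x i| ≤ ε) (h2 : |u x - v x| ≤ ε)
    (h3 : ∀ ξ : Fin d → ℝ, ∑ i, ∑ j, (D2 u x i j - D2 v x i j) * ξ i * ξ j ≤ ε * ∑ i, ξ i ^ 2) :
    Pop P u x ≤ Pop P v x + C * ε := by
  let n : Fin d → Fin d → ℝ := fun i j => D2 v x i j + (if i = j then ε else 0) - D2 u x i j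
  have hn : ∀ ξ : Fin d → ℝ, 0 ≤ ∑ i, ∑ j, n i j * ξ i * ξ j := by
    intro ξ
    have h := h3 ξ
    have : ∑ i, ∑ j, n i j * ξ i * ξ j
        = ε * ∑ i, ξ i ^ 2 - ∑ i, ∑ j, (D2 u x i j - D2 v x i j) * ξ i * ξ j := by
      have e : ε * ∑ i, ξ i ^ 2 = ∑ i, ∑ j, (if i = j then ε else 0) * ξ i * ξ j := by
        rw [Finset.mul_sum]
        refine Finset.sum_congr rfl fun i _ => ?_
        simp only [ite_mul, zero_mul, Finset.sum_ite_eq, Finset.mem_univ, if_true]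
        ring
      rw [e, ← Finset.sum_sub_distrib]
      refine Finset.sum_congr rfl fun i _ => ?_
      rw [← Finset.sum_sub_distrib]
      refine Finset.sum_congr rfl fun j _ => ?_
      simp only [n]; ring
    rw [this]; linarith
  have hm := aux_Pmono δhat K1 hδ P hP (fun i j => D2 u x i j) n (fun i => D1 u x i) (u x) hn
  have hd := hC.dist_le_mul
    ((fun i j => D2 u x i j) + n, (fun i => D1 u x i), u x)
    ((fun i j => D2 v x i j), (fun i => D1 v x i), v x)
  have hdd : dist (((fun i j => D2 u x i j) + n, (fun i => D1 u x i), u x) :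
      (Fin d → Fin d → ℝ) × (Fin d → ℝ) × ℝ)
      ((fun i j => D2 v x i j), (fun i => D1 v x i), v x) ≤ ε := by
    rw [Prod.dist_eq, Prod.dist_eq]
    refine max_le ?_ (max_le ?_ ?_)
    · refine (dist_pi_le_iff hε.le).2 fun i => (dist_pi_le_iff hε.le).2 fun j => ?_
      rw [Real.dist_eq]
      have : ((fun i j => D2 u x i j) + n) i j - D2 v x i j = if i = j then ε else 0 := by
        simp only [Pi.add_apply, n]; ring
      rw [this]
      split_ifs
      · rw [abs_of_pos hε]
      · simpa using hε.le
    · refine (dist_pi_le_iff hε.le).2 fun i => ?_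
      rw [Real.dist_eq]; exact h1 i
    · rw [Real.dist_eq]; exact h2
  rw [Real.dist_eq] at hd
  have h5 := (le_abs_self _).trans hd
  have h6 : (C : ℝ) * dist (((fun i j => D2 u x i j) + n, (fun i => D1 u x i), u x) :
      (Fin d → Fin d → ℝ) × (Fin d → ℝ) × ℝ)
      ((fun i j => D2 v x i j), (fun i => D1 v x i), v x) ≤ C * ε :=
    mul_le_mul_of_nonneg_left hdd C.2
  simp only at h5
  unfold Pop
  linarith

/-- **Theorem 2.5 (ii), existence part.** The function `w = lim_{K→∞} u_K` is a
viscosity solution of `F[w] = 0` in `G` with `w = g` on `∂G`. -/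
theorem statement7 {d : ℕ} {A B : Type} [MetricSpace A] [MetricSpace B]
    (δ K0 χ γ δhat K1 : ℝ) (ω : ℝ → ℝ)
    (a : A → B → E d → Fin d → Fin d → ℝ) (b : A → B → E d → Fin d → ℝ)
    (c f : A → B → E d → ℝ) (G : Set (E d)) (g : E d → ℝ)
    (P : (Fin d → Fin d → ℝ) → (Fin d → ℝ) → ℝ → ℝ)
    (hset : Setting δ K0 χ γ δhat K1 ω a b c f G g P)
    (hmod : ModulusAssump χ ω)
    (uK vK : ℝ → E d → ℝ)
    (hsol : ∀ K : ℝ, 0 ≤ K →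
      IsUSol a b c f G g P K (uK K) ∧ IsVSol a b c f G g P K (vK K))
    (w : E d → ℝ)
    (hw : TendstoUniformlyOn (fun K => uK K) w Filter.atTop (closure G)) :
    ViscositySolution a b c f G g w := by
  obtain ⟨hd, hδ, hδ1, hK0, hχ, hχ1, hγ, hδh, hδh1, hK1, hA, hB, -, -, hco, hdom, hg, hP⟩ := hset
  obtain ⟨ha, haK, hb, hc, hf, -, -, ha', hb', hc', hf'⟩ := hco
  obtain ⟨hω, -, hω0, -⟩ := hmod
  have hγ0 : 0 < γ := by rw [hγ]; apply div_pos <;> linarith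
  have hG := hdom.1
  have hwc : ContinuousOn w (closure G) := by
    refine hw.continuousOn (Eventually.frequently ?_)
    filter_upwards [eventually_ge_atTop (0:ℝ)] with K hK
    exact (hsol K hK).1.1
  have happ : ∀ κ : ℝ, 0 < κ → ∀ᶠ K in atTop, ∀ x ∈ closure G, |uK K x - w x| ≤ κ := by
    intro κ hκ
    filter_upwards [Metric.tendstoUniformlyOn_iff.1 hw κ hκ] with K hK x hx
    have := hK x hx
    rw [dist_comm, Real.dist_eq] at this
    exact this.le
  obtain ⟨C, hC⟩ := hP.2.2.1
  refine ⟨hwc, ?_, ?_, ?_⟩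
  · intro x hx
    have h1 := hw.tendsto_at (frontier_subset_closure hx)
    refine tendsto_nhds_unique h1 ?_
    refine tendsto_const_nhds.congr' ?_
    filter_upwards [eventually_ge_atTop (0:ℝ)] with K hK
    exact ((hsol K hK).1.2.1 hx).symm
  · intro φ hφ' x0 hx0 hmax h0
    have hφ : ContDiff ℝ 2 φ := contDiff_infty.1 hφ' 2
    refine le_of_forall_pos_le_add fun η hη => ?_
    obtain ⟨r0, hr0, hr⟩ := Metric.eventually_nhds_iff_ball.1
      (aux_cont a b c f K0 γ ω hγ0 hω hω0 haK hb hc ha' hb' hc' hf' φ hφ x0 (η/2) (half_pos hη))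
    have hD : 0 < (2 * (d:ℝ) + 1) * K0 + 1 := by positivity
    obtain ⟨ε, hε, hεη⟩ : ∃ ε : ℝ, 0 < ε ∧ (2 * (d:ℝ) + 1) * K0 * ε ≤ η / 2 := by
      refine ⟨η / 2 / ((2 * (d:ℝ) + 1) * K0 + 1), by positivity, ?_⟩
      rw [mul_div_assoc', div_le_iff₀ hD]
      nlinarith
    obtain ⟨κ, hκ, H⟩ := aux_touch' G hG w φ (hwc.mono subset_closure) hφ x0 hx0 hmax h0 ε hε r0 hr0
    obtain ⟨K, hKκ, hK⟩ := ((happ κ hκ).and (eventually_ge_atTop (0:ℝ))).exists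
    obtain ⟨-, -, hu1, hu2, hu3⟩ := (hsol K hK).1
    obtain ⟨x, hxG, hxb, hxN, h1, h2, h3⟩ := H (uK K) hu1 hu2
      (fun x hx => hKκ x (subset_closure hx)) _ (ae_iff.1 hu3)
    have heq := not_not.1 hxN hxG
    have hF : Fop a b c f (uK K) x ≤ 0 := heq ▸ le_max_left _ _
    obtain ⟨M, hM⟩ := aux_bdd a b c f K0 haK hb hc hf φ x0
    obtain ⟨M', hM'⟩ := aux_bdd a b c f K0 haK hb hc hf (uK K) x
    have := aux_supinf _ _ M M' η hM hM' (fun α β => by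
      have e1 := aux_jet a b c δ K0 ε hδ hε ha haK hb hc φ (uK K) x h1 h2 h3 α β
      have e2 := (abs_le.1 (hr x hxb α β)).1
      linarith)
    unfold Fop at hF ⊢
    linarith
  · intro φ hφ' x0 hx0 hmin h0
    have hφ : ContDiff ℝ 2 φ := contDiff_infty.1 hφ' 2
    refine le_of_forall_pos_le_add fun η hη => ?_
    have hPc : Continuous (fun x => Pop P φ x) := by
      have : Continuous (fun x => (((fun i j => D2 φ x i j), (fun i => D1 φ x i), φ x) :
          (Fin d → Fin d → ℝ) × (Fin d → ℝ) × ℝ)) :=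
        (continuous_pi fun i => continuous_pi fun j => aux_cD2 φ hφ i j).prodMk
          ((continuous_pi fun i => aux_cD1 φ hφ i).prodMk hφ.continuous)
      exact hC.continuous.comp this
    have hPe : ∀ᶠ x in 𝓝 x0, Pop P φ x < Pop P φ x0 + 1 :=
      hPc.continuousAt.eventually (gt_mem_nhds (by linarith))
    obtain ⟨r0, hr0, hr⟩ := Metric.eventually_nhds_iff_ball.1
      ((aux_cont a b c f K0 γ ω hγ0 hω hω0 haK hb hc ha' hb' hc' hf' φ hφ x0 (η/2)
        (half_pos hη)).and hPe)
    have hD : 0 < (2 * (d:ℝ) + 1) * K0 + 1 := by positivity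
    obtain ⟨ε, hε, hεη⟩ : ∃ ε : ℝ, 0 < ε ∧ (2 * (d:ℝ) + 1) * K0 * ε ≤ η / 2 := by
      refine ⟨η / 2 / ((2 * (d:ℝ) + 1) * K0 + 1), by positivity, ?_⟩
      rw [mul_div_assoc', div_le_iff₀ hD]
      nlinarith
    have hmax : IsLocalMax (fun x => (fun y => -(φ y)) x - (fun y => -(w y)) x) x0 := by
      filter_upwards [hmin] with x hx
      linarith
    obtain ⟨κ, hκ, H⟩ := aux_touch' G hG (fun y => -(w y)) (fun y => -(φ y))
      (hwc.mono subset_closure).neg hφ.neg x0 hx0 hmax (by linarith) ε hε r0 hr0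
    obtain ⟨K, ⟨hKκ, hK⟩, hKP⟩ := (((happ κ hκ).and (eventually_ge_atTop (0:ℝ))).and
      (eventually_gt_atTop (Pop P φ x0 + 1 + C * ε))).exists
    obtain ⟨-, -, hu1, hu2, hu3⟩ := (hsol K hK).1
    obtain ⟨x, hxG, hxb, hxN, h1, h2, h3⟩ := H (fun y => -(uK K y)) hu1.neg
      (fun x hx => by
        obtain ⟨r, hr, hrG, C', hC'⟩ := hu2 x hx
        refine ⟨r, hr, hrG, C', ?_⟩
        have e : fderiv ℝ (fun y => -(uK K y)) = fun y => -(fderiv ℝ (uK K) y) := by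
          funext y; rw [fderiv_fun_neg]
        rw [e]
        intro y hy z hz
        rw [edist_neg_neg]
        exact hC' hy hz)
      (fun x hx => by
        have := hKκ x (subset_closure hx)
        rw [abs_sub_comm] at this
        rwa [show -(uK K x) - -(w x) = w x - uK K x by ring]) _ (ae_iff.1 hu3)
    have heq := not_not.1 hxN hxG
    have h1' : ∀ i, |D1 (uK K) x i - D1 φ x i| ≤ ε := fun i => by
      have := h1 i
      rw [aux_nD1, aux_nD1] at this
      rwa [show D1 (uK K) x i - D1 φ x i = - D1 φ x i - - D1 (uK K) x i by ring]
    have h2' : |uK K x - φ x| ≤ ε := by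
      rwa [show uK K x - φ x = - φ x - - uK K x by ring]
    have h3' : ∀ ξ : Fin d → ℝ, ∑ i, ∑ j, (D2 (uK K) x i j - D2 φ x i j) * ξ i * ξ j
        ≤ ε * ∑ i, ξ i ^ 2 := fun ξ => by
      refine le_trans (le_of_eq ?_) (h3 ξ)
      refine Finset.sum_congr rfl fun i _ => Finset.sum_congr rfl fun j _ => ?_
      rw [aux_nD2, aux_nD2]; ring
    have hPu := aux_Pbd δhat K1 hδh P hP C hC (uK K) φ x ε hε h1' h2' h3'
    have hPx := (hr x hxb).2
    have hF : 0 ≤ Fop a b c f (uK K) x := by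
      rcases le_max_iff.1 heq.ge with h | h
      · exact h
      · exfalso; linarith
    obtain ⟨M, hM⟩ := aux_bdd a b c f K0 haK hb hc hf φ x0
    obtain ⟨M', hM'⟩ := aux_bdd a b c f K0 haK hb hc hf (uK K) x
    have := aux_supinf _ _ M' M η hM' hM (fun α β => by
      have e1 := aux_jet a b c δ K0 ε hδ hε ha haK hb hc (uK K) φ x h1' h2' h3' α β
      have e2 := (abs_le.1 ((hr x hxb).1 α β)).2
      linarith)
    unfold Fop at hF ⊢
    linarith
end
end

section
/- For every ε ∈ (0,1] such that G_ε ≠ ∅ one has ‖w‖_{C^{1+χ}(G_ε)} ≤ N ε^{−1−χ}, where N is the constant from the interior C^{1+χ} estimate for u_K and v_K (depending only on K_0, δ, d, and G) and χ = χ(d,δ). -/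
noncomputable section

open MeasureTheory Set Filter Topology
open scoped ENNReal NNReal

lemma opNorm_le_vecNorm {d : ℕ} (L : E d →L[ℝ] ℝ) :
    ‖L‖ ≤ vecNorm (fun i => L (EuclideanSpace.single i 1)) := by
  refine L.opNorm_le_bound (Real.sqrt_nonneg _) fun v => ?_
  have hv : v = ∑ i, v i • (EuclideanSpace.single i (1:ℝ) : E d) := by
    ext j
    simp [Finset.sum_apply, Pi.single_apply]
  have hL : L v = ∑ i, L (EuclideanSpace.single i 1) * v i := by
    conv_lhs => rw [hv]
    simp [map_sum, mul_comm]
  rw [hL, EuclideanSpace.norm_eq, vecNorm, ← Real.sqrt_mul (by positivity), Real.norm_eq_abs]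
  apply Real.abs_le_sqrt
  simpa using Finset.sum_mul_sq_le_sq_mul_sq Finset.univ
    (fun i => L (EuclideanSpace.single i 1)) (fun i => v i)

lemma isOpen_Gshrink {d : ℕ} {G : Set (E d)} (hG : IsOpen G) (ε : ℝ) :
    IsOpen (Gshrink G ε) :=
  hG.inter (isOpen_lt continuous_const (Metric.continuous_infDist_pt _))

lemma HolderBound.opNorm {d : ℕ} {χ C : ℝ} {Q : Set (E d)} {u : E d → ℝ}
    (h : HolderBound χ Q u C) {x y : E d} (hx : x ∈ Q) (hy : y ∈ Q) :
    ‖fderiv ℝ u x - fderiv ℝ u y‖ ≤ C * ‖x - y‖ ^ χ :=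
  (opNorm_le_vecNorm _).trans (h.2.2.2 x hx y hy)

lemma HolderBound.taylor {d : ℕ} {χ C : ℝ} (hχ : 0 < χ) (hC : 0 ≤ C) {Q : Set (E d)}
    {u : E d → ℝ} (h : HolderBound χ Q u C) {x y : E d} {r : ℝ}
    (hr : Metric.ball x r ⊆ Q) (hy : y ∈ Metric.ball x r) :
    |u y - u x - fderiv ℝ u x (y - x)| ≤ C * ‖y - x‖ ^ χ * ‖y - x‖ := by
  have hsub : Metric.closedBall x ‖y - x‖ ⊆ Q := by
    refine subset_trans (Metric.closedBall_subset_ball ?_) hr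
    rw [← dist_eq_norm]; exact hy
  have hx : x ∈ Q := hsub (Metric.mem_closedBall_self (norm_nonneg _))
  refine Convex.norm_image_sub_le_of_norm_fderiv_le' (𝕜 := ℝ)
    (s := Metric.closedBall x ‖y - x‖) (fun z hz => h.1 z (hsub hz)) (fun z hz => ?_)
    (convex_closedBall _ _) (Metric.mem_closedBall_self (norm_nonneg _)) ?_
  · refine (h.opNorm (hsub hz) hx).trans ?_
    have : ‖z - x‖ ≤ ‖y - x‖ := by rw [← dist_eq_norm z x]; exact hz
    gcongr
  · simp [dist_eq_norm]

lemma HolderBound.limit {d : ℕ} {χ C : ℝ} (hχ : 0 < χ) (hC : 0 ≤ C) {Q : Set (E d)}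
    (hQ : IsOpen Q) {uK : ℝ → E d → ℝ} {w : E d → ℝ}
    (h : ∀ K, 0 ≤ K → HolderBound χ Q (uK K) C)
    (hw : ∀ x ∈ Q, Tendsto (fun K => uK K x) atTop (𝓝 (w x))) : HolderBound χ Q w C := by
  let U : Ultrafilter ℝ := Ultrafilter.of atTop
  have hU : (U : Filter ℝ) ≤ atTop := Ultrafilter.of_le _
  have hev : ∀ᶠ K in (U : Filter ℝ), 0 ≤ K := hU (eventually_ge_atTop 0)
  have hwU : ∀ x ∈ Q, Tendsto (fun K => uK K x) U (𝓝 (w x)) := fun x hx => (hw x hx).mono_left hU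
  have hD : ∀ x ∈ Q, ∃ L : E d →L[ℝ] ℝ, Tendsto (fun K => fderiv ℝ (uK K) x) U (𝓝 L) := by
    intro x hx
    have hmem : ∀ᶠ K in (U : Filter ℝ),
        fderiv ℝ (uK K) x ∈ Metric.closedBall (0 : E d →L[ℝ] ℝ) C := by
      filter_upwards [hev] with K hK
      rw [mem_closedBall_zero_iff]
      refine norm_fderiv_le_of_lip' ℝ hC ?_
      filter_upwards [hQ.mem_nhds hx] with y hy
      exact (h K hK).2.2.1 y hy x hx
    obtain ⟨L, -, hL⟩ := (isCompact_closedBall (0 : E d →L[ℝ] ℝ) C).ultrafilter_le_nhds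
      (U.map (fun K => fderiv ℝ (uK K) x)) (le_principal_iff.2 hmem)
    exact ⟨L, hL⟩
  choose! L hL using hD
  have hfd : ∀ x ∈ Q, HasFDerivAt w (L x) x := by
    intro x hx
    obtain ⟨r, hr0, hr⟩ := Metric.isOpen_iff.1 hQ x hx
    have hT : ∀ y ∈ Metric.ball x r,
        |w y - w x - L x (y - x)| ≤ C * ‖y - x‖ ^ χ * ‖y - x‖ := by
      intro y hy
      have ht : Tendsto (fun K => |uK K y - uK K x - fderiv ℝ (uK K) x (y - x)|) U
          (𝓝 |w y - w x - L x (y - x)|) :=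
        (((hwU y (hr hy)).sub (hwU x hx)).sub
          (((ContinuousLinearMap.apply ℝ ℝ (y - x)).continuous.tendsto _).comp (hL x hx))).abs
      refine le_of_tendsto ht ?_
      filter_upwards [hev] with K hK
      exact (h K hK).taylor hχ hC hr hy
    refine HasFDerivAt.of_isLittleO (Asymptotics.isLittleO_iff.2 fun e he => ?_)
    have hc : Tendsto (fun y : E d => C * ‖y - x‖ ^ χ) (𝓝 x) (𝓝 0) := by
      have : Continuous (fun y : E d => C * ‖y - x‖ ^ χ) :=
        continuous_const.mul (((continuous_id.sub continuous_const).norm).rpow_const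
          fun _ => Or.inr hχ.le)
      simpa [Real.zero_rpow hχ.ne'] using this.tendsto x
    filter_upwards [hc.eventually_le_const he, Metric.ball_mem_nhds x hr0] with y hy1 hy2
    exact (hT y hy2).trans (by gcongr)
  refine ⟨fun x hx => (hfd x hx).differentiableAt, fun x hx => ?_, fun x hx y hy => ?_,
    fun x hx y hy => ?_⟩
  · refine le_of_tendsto (hwU x hx).abs ?_
    filter_upwards [hev] with K hK
    exact (h K hK).2.1 x hx
  · refine le_of_tendsto ((hwU x hx).sub (hwU y hy)).abs ?_
    filter_upwards [hev] with K hK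
    exact (h K hK).2.2.1 x hx y hy
  · have hp : ∀ z ∈ Q, ∀ i, Tendsto (fun K => D1 (uK K) z i) U (𝓝 (D1 w z i)) := by
      intro z hz i
      unfold D1
      rw [(hfd z hz).fderiv]
      exact (((ContinuousLinearMap.apply ℝ ℝ
        (EuclideanSpace.single i (1:ℝ) : E d)).continuous.tendsto _).comp (hL z hz))
    have ht : Tendsto (fun K => vecNorm (fun i => D1 (uK K) x i - D1 (uK K) y i)) U
        (𝓝 (vecNorm (fun i => D1 w x i - D1 w y i))) := by
      unfold vecNorm
      exact (Real.continuous_sqrt.tendsto _).comp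
        (tendsto_finset_sum _ fun i _ => ((hp x hx i).sub (hp y hy i)).pow 2)
    refine le_of_tendsto ht ?_
    filter_upwards [hev] with K hK
    exact (h K hK).2.2.2 x hx y hy

/-- **Theorem 2.5 (iv).** For any `ε ∈ (0,1]` with `G_ε ≠ ∅` one has
`‖w‖_{C^{1+χ}(G_ε)} ≤ N ε^{-1-χ}`, with `N` the constant from the interior
`C^{1+χ}` estimate for `u_K` and `v_K`. -/
theorem statement10 {d : ℕ} {A B : Type} [MetricSpace A] [MetricSpace B]
    (δ K0 χ γ δhat K1 : ℝ) (ω : ℝ → ℝ)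
    (a : A → B → E d → Fin d → Fin d → ℝ) (b : A → B → E d → Fin d → ℝ)
    (c f : A → B → E d → ℝ) (G : Set (E d)) (g : E d → ℝ)
    (P : (Fin d → Fin d → ℝ) → (Fin d → ℝ) → ℝ → ℝ)
    (hset : Setting δ K0 χ γ δhat K1 ω a b c f G g P)
    (hmod : ModulusAssump χ ω)
    (uK vK : ℝ → E d → ℝ)
    (hsol : ∀ K : ℝ, 0 ≤ K →
      IsUSol a b c f G g P K (uK K) ∧ IsVSol a b c f G g P K (vK K))
    (N : ℝ) (hN : 0 < N)
    (hbound : ∀ K : ℝ, 0 ≤ K → ∀ ε : ℝ, ε ∈ Set.Ioc (0:ℝ) 1 → (Gshrink G ε).Nonempty →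
      HolderBound χ (Gshrink G ε) (uK K) (N * ε ^ (-1 - χ)) ∧
      HolderBound χ (Gshrink G ε) (vK K) (N * ε ^ (-1 - χ)))
    (w : E d → ℝ)
    (hw : TendstoUniformlyOn (fun K => uK K) w Filter.atTop (closure G)) :
    ∀ ε : ℝ, ε ∈ Set.Ioc (0:ℝ) 1 → (Gshrink G ε).Nonempty →
      HolderBound χ (Gshrink G ε) w (N * ε ^ (-1 - χ)) := by
  intro ε hε hne
  obtain ⟨-, -, -, -, hχ, -, -, -, -, -, -, -, -, -, -, hG, -, -⟩ := hset
  have hε0 : 0 < ε := hε.1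
  exact HolderBound.limit hχ (by positivity) (isOpen_Gshrink hG.1 ε)
    (fun K hK => (hbound K hK ε hε hne).1)
    (fun x hx => hw.tendsto_at (subset_closure hx.1))
end
end
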